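/- arXiv:1405.0556 — 12 statements merged into one kernel-verified Lean document; each statement's English description precedes it below -/
import Mathlib

section
/- Let M be an A-module, m a maximal ideal of R, and v ∈ M a nonzero vector with r•v = 0 for all r ∈ m. If X•v = 0 then t ∈ m, and if Y•v = 0 then σ(t) ∈ m. -/
variable {R A M : Type*}

/-- Weight space of an `A`-module `M` (viewed as `R`-module via `φ`) at an ideal `m`:
`M_m = {v ∈ M : r • v = 0 for all r ∈ m}`. -/
def weightSpace [CommRing R] [Ring A] [AddCommGroup M] [Module A M]
    (φ : R →+* A) (m : Ideal R) : AddSubgroup M where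
  carrier := {v | ∀ r ∈ m, φ r • v = 0}
  zero_mem' := fun r _ => smul_zero (φ r)
  add_mem' := by
    intro a b ha hb r hr
    rw [smul_add, ha r hr, hb r hr, add_zero]
  neg_mem' := by
    intro a ha r hr
    rw [smul_neg, ha r hr, neg_zero]

/-- `M` is a weight module: it is the internal direct sum of its weight spaces
over all maximal ideals of `R`. -/
def IsWeightModule [CommRing R] [Ring A] [AddCommGroup M] [Module A M]
    (φ : R →+* A) : Prop :=
  (⨆ m : {m : Ideal R // m.IsMaximal}, weightSpace (M := M) φ m.1) = ⊤ ∧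
  iSupIndep (fun m : {m : Ideal R // m.IsMaximal} => weightSpace (M := M) φ m.1)

/-- `σ` is an essential endomorphism: for every maximal ideal `m` the map
`r ↦ σ(r) + m` from `R` to `R/m` is surjective. -/
def IsEssential [CommRing R] (σ : R →+* R) : Prop :=
  ∀ m : Ideal R, m.IsMaximal →
    Function.Surjective (fun r : R => Ideal.Quotient.mk m (σ r))

theorem stmt_0 [CommRing R] [Ring A] [AddCommGroup M] [Module A M]
    (φ : R →+* A) (σ : R →+* R) (t : R) (X Y : A)
    (hYX : Y * X = φ t) (hXY : X * Y = φ (σ t))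
    (hXr : ∀ r : R, X * φ r = φ (σ r) * X)
    (hrY : ∀ r : R, φ r * Y = Y * φ (σ r))
    (m : Ideal R) (hm : m.IsMaximal)
    (v : M) (hv : v ≠ 0) (hwv : ∀ r ∈ m, φ r • v = 0) :
    (X • v = 0 → t ∈ m) ∧ (Y • v = 0 → σ t ∈ m) := by
  have key : ∀ s : R, φ s • v = 0 → s ∈ m := by
    intro s hs
    by_contra hsm
    obtain ⟨y, i, hi, h⟩ := hm.exists_inv hsm
    apply hv
    have h1 : φ (y * s + i) • v = 0 := by
      rw [map_add, map_mul, add_smul, mul_smul, hs, smul_zero, hwv i hi, add_zero]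
    rwa [h, map_one, one_smul] at h1
  constructor
  · intro h
    apply key
    rw [← hYX, mul_smul, h, smul_zero]
  · intro h
    apply key
    rw [← hXY, mul_smul, h, smul_zero]
end

section
/- Let M be a weight A-module and m a maximal ideal of R. Then X•M_m is contained in the sum of the weight spaces M_n taken over all maximal ideals n of R with σ(m) ⊆ n. -/
variable {R A M : Type*}

theorem stmt_1 [CommRing R] [Ring A] [AddCommGroup M] [Module A M]
    (φ : R →+* A) (σ : R →+* R) (t : R) (X Y : A)
    (hYX : Y * X = φ t) (hXY : X * Y = φ (σ t))
    (hXr : ∀ r : R, X * φ r = φ (σ r) * X)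
    (hrY : ∀ r : R, φ r * Y = Y * φ (σ r))
    (hw : IsWeightModule (M := M) φ)
    (m : Ideal R) (hm : m.IsMaximal) :
    ∀ v ∈ weightSpace (M := M) φ m,
      X • v ∈ ⨆ n ∈ {n : Ideal R | n.IsMaximal ∧ ∀ r ∈ m, σ r ∈ n},
        weightSpace (M := M) φ n := by
  classical
  obtain ⟨htop, hind⟩ := hw
  intro v hv
  have hmem : X • v ∈ (⨆ n : {n : Ideal R // n.IsMaximal}, weightSpace (M := M) φ n.1) := by
    rw [htop]; trivial
  have key : ∀ w ∈ (⨆ n : {n : Ideal R // n.IsMaximal}, weightSpace (M := M) φ n.1),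
      ∃ f : Π₀ n : {n : Ideal R // n.IsMaximal}, weightSpace (M := M) φ n.1,
        DFinsupp.sumAddHom (fun n => (weightSpace (M := M) φ n.1).subtype) f = w := by
    intro w hw
    induction hw using AddSubgroup.iSup_induction' with
    | hp i x hx => exact ⟨DFinsupp.single i ⟨x, hx⟩, by simp⟩
    | h1 => exact ⟨0, map_zero _⟩
    | hadd x y _ _ h1 h2 =>
      obtain ⟨f, rfl⟩ := h1
      obtain ⟨g, rfl⟩ := h2
      exact ⟨f + g, map_add _ _ _⟩
  obtain ⟨f, hf⟩ := key _ hmem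
  have hinj := hind.dfinsuppSumAddHom_injective
  have hann : ∀ r ∈ m, ∀ n, φ (σ r) • ((f n : weightSpace (M := M) φ n.1) : M) = 0 := by
    intro r hr
    let T : ∀ n : {n : Ideal R // n.IsMaximal},
        weightSpace (M := M) φ n.1 →+ weightSpace (M := M) φ n.1 := fun n =>
      { toFun := fun x => ⟨φ (σ r) • (x : M), fun s hs => by
          rw [← mul_smul, ← map_mul, mul_comm, map_mul, mul_smul, x.2 s hs, smul_zero]⟩
        map_zero' := by ext; simp
        map_add' := fun x y => by ext; simp }
    have hcomm : ∀ g : Π₀ n : {n : Ideal R // n.IsMaximal}, weightSpace (M := M) φ n.1,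
        DFinsupp.sumAddHom (fun n => (weightSpace (M := M) φ n.1).subtype)
          (DFinsupp.mapRange.addMonoidHom T g) =
        φ (σ r) • DFinsupp.sumAddHom (fun n => (weightSpace (M := M) φ n.1).subtype) g := by
      intro g
      induction g using DFinsupp.induction with
      | h0 => simp
      | ha i b g _ _ ih =>
        rw [map_add, map_add, map_add, smul_add, ih]
        congr 1
        simp [T]
    have h0 : DFinsupp.mapRange.addMonoidHom T f = 0 := by
      apply hinj
      rw [map_zero, hcomm, hf, ← mul_smul, ← hXr, mul_smul, hv r hr, smul_zero]
    intro n
    have := congrArg (fun g => ((g n : weightSpace (M := M) φ n.1) : M)) h0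
    simpa [T] using this
  rw [← hf, DFinsupp.sumAddHom_apply]
  refine AddSubgroup.sum_mem _ fun n hn => ?_
  have hne : ((f n : weightSpace (M := M) φ n.1) : M) ≠ 0 := by simpa using hn
  refine AddSubgroup.mem_iSup_of_mem n.1 (AddSubgroup.mem_iSup_of_mem ⟨n.2, ?_⟩ (f n).2)
  intro r hr
  by_contra hc
  obtain ⟨s, i, hi, hs⟩ := n.2.exists_inv hc
  apply hne
  rw [← one_smul A ((f n : weightSpace (M := M) φ n.1) : M), ← map_one φ, ← hs, map_add, map_mul,
    add_smul, mul_smul, hann r hr n, (f n).2 i hi, smul_zero, add_zero]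
end

section
/- Let M be a weight A-module and m ∈ supp(M). Assume that either σ(t) ∉ m, or there exists a maximal ideal n ∈ supp(M) with σ(n) ⊆ m. Then Y•M_m is contained in the sum of the weight spaces M_n taken over all maximal ideals n of R with σ(n) ⊆ m. -/
variable {R A M : Type*}

theorem stmt_2 [CommRing R] [Ring A] [AddCommGroup M] [Module A M]
    (φ : R →+* A) (σ : R →+* R) (t : R) (X Y : A)
    (hYX : Y * X = φ t) (hXY : X * Y = φ (σ t))
    (hXr : ∀ r : R, X * φ r = φ (σ r) * X)
    (hrY : ∀ r : R, φ r * Y = Y * φ (σ r))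
    (hw : IsWeightModule (M := M) φ)
    (m : Ideal R) (hm : m.IsMaximal) (hsupp : weightSpace (M := M) φ m ≠ ⊥)
    (hcase : σ t ∉ m ∨
      ∃ n : Ideal R, n.IsMaximal ∧ weightSpace (M := M) φ n ≠ ⊥ ∧ ∀ r ∈ n, σ r ∈ m) :
    ∀ v ∈ weightSpace (M := M) φ m,
      Y • v ∈ ⨆ n ∈ {n : Ideal R | n.IsMaximal ∧ ∀ r ∈ n, σ r ∈ m},
        weightSpace (M := M) φ n := by
  have key : ∀ n : Ideal R, n.IsMaximal → (∀ r ∈ n, σ r ∈ m) →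
      ∀ v ∈ weightSpace (M := M) φ m,
      Y • v ∈ ⨆ n ∈ {n : Ideal R | n.IsMaximal ∧ ∀ r ∈ n, σ r ∈ m},
        weightSpace (M := M) φ n := by
    intro n hn hnm v hv
    have h1 : Y • v ∈ weightSpace (M := M) φ n := by
      intro r hr
      rw [← mul_smul, hrY, mul_smul, hv _ (hnm r hr), smul_zero]
    have hle := le_iSup₂ (f := fun (n : Ideal R)
      (_ : n ∈ {n : Ideal R | n.IsMaximal ∧ ∀ r ∈ n, σ r ∈ m}) => weightSpace (M := M) φ n)
      n ⟨hn, hnm⟩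
    exact hle h1
  rcases hcase with hst | ⟨n, hn, -, hnm⟩
  swap
  · exact key n hn hnm
  intro v hv
  by_cases hv0 : v = 0
  · rw [hv0, smul_zero]; exact zero_mem _
  have hann : ∀ r : R, φ r • v = 0 → r ∈ m := by
    intro r hr
    by_contra hrm
    obtain ⟨y, i, hi, h⟩ := hm.exists_inv hrm
    apply hv0
    have h2 : φ (y * r + i) • v = 0 := by
      rw [map_add, map_mul, add_smul, mul_smul, hr, smul_zero, hv i hi, add_zero]
    rwa [h, map_one, one_smul] at h2
  have hC : ∀ w : M, ∃ s : Multiset (Ideal R), (∀ I ∈ s, I.IsMaximal) ∧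
      ∀ r ∈ s.prod, φ r • w = 0 := by
    intro w
    have hw' : w ∈ (⨆ m : {m : Ideal R // m.IsMaximal}, weightSpace (M := M) φ m.1) := by
      rw [hw.1]; trivial
    induction hw' using AddSubgroup.iSup_induction' with
    | hp i x hx =>
      refine ⟨{i.1}, ?_, ?_⟩
      · intro I hI
        rw [Multiset.mem_singleton.1 hI]; exact i.2
      · intro r hr
        rw [Multiset.prod_singleton] at hr
        exact hx r hr
    | h1 => exact ⟨0, by simp, by simp⟩
    | hadd x y _ _ hx hy =>
      obtain ⟨s, hs, hs'⟩ := hx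
      obtain ⟨u, hu, hu'⟩ := hy
      refine ⟨s + u, ?_, ?_⟩
      · intro I hI
        rcases Multiset.mem_add.1 hI with h | h
        · exact hs I h
        · exact hu I h
      · intro r hr
        rw [Multiset.prod_add] at hr
        have hr1 : r ∈ s.prod := (Ideal.mul_le_left : s.prod * u.prod ≤ s.prod) hr
        have hr2 : r ∈ u.prod := (Ideal.mul_le_right : s.prod * u.prod ≤ u.prod) hr
        rw [smul_add, hs' r hr1, hu' r hr2, add_zero]
  obtain ⟨s, hs, hs'⟩ := hC (Y • v)
  have hp : (m.comap σ).IsPrime := by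
    have := hm.isPrime
    exact Ideal.comap_isPrime σ m
  have hle : s.prod ≤ m.comap σ := by
    intro r hr
    have h0 := hs' r hr
    rw [← mul_smul, hrY, mul_smul] at h0
    have h1 : φ (σ t * σ r) • v = 0 := by
      rw [map_mul, ← hXY, mul_smul, mul_smul, h0, smul_zero]
    exact (hm.isPrime.mem_or_mem (hann _ h1)).resolve_left hst
  obtain ⟨n, hns, hn⟩ := (Ideal.IsPrime.multiset_prod_le hp).1 hle
  exact key n (hs n hns) hn v hv
end

section
/- Let m be a maximal ideal of R such that σ(t) ∉ m and such that for every maximal ideal n of R one has σ(n) ⊄ m. Then for every weight A-module M the weight space M_m is zero. -/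
variable {R A M : Type*}

theorem stmt_3 [CommRing R] [Ring A]
    (φ : R →+* A) (σ : R →+* R) (t : R) (X Y : A)
    (hYX : Y * X = φ t) (hXY : X * Y = φ (σ t))
    (hXr : ∀ r : R, X * φ r = φ (σ r) * X)
    (hrY : ∀ r : R, φ r * Y = Y * φ (σ r))
    (m : Ideal R) (hm : m.IsMaximal) (hmt : σ t ∉ m)
    (hno : ∀ n : Ideal R, n.IsMaximal → ¬ (∀ r ∈ n, σ r ∈ m)) :
    ∀ (M : Type*) [AddCommGroup M] [Module A M],
      IsWeightModule (M := M) φ → weightSpace (M := M) φ m = ⊥ := by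
  intro M _ _ hW
  have key : ∀ w : M, ∃ r : R, σ r ∉ m ∧ φ r • w = 0 := by
    intro w
    have hw : w ∈ (⨆ n : {n : Ideal R // n.IsMaximal}, weightSpace (M := M) φ n.1) := by
      rw [hW.1]; trivial
    induction hw using AddSubgroup.iSup_induction' with
    | hp n x hx =>
      have h := hno n.1 n.2
      push Not at h
      obtain ⟨r, hr, hr'⟩ := h
      exact ⟨r, hr', hx r hr⟩
    | h1 =>
      refine ⟨1, ?_, smul_zero _⟩
      rw [map_one]
      exact fun h => hm.ne_top ((Ideal.eq_top_iff_one m).2 h)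
    | hadd x y _ _ hx hy =>
      obtain ⟨a, ha, hax⟩ := hx
      obtain ⟨b, hb, hby⟩ := hy
      refine ⟨a * b, ?_, ?_⟩
      · rw [map_mul]
        exact fun h => (hm.isPrime.mem_or_mem h).elim ha hb
      · rw [smul_add, map_mul, mul_smul, mul_smul, hby, smul_zero, add_zero, ← mul_smul,
          ← map_mul, mul_comm, map_mul, mul_smul, hax, smul_zero]
  rw [eq_bot_iff]
  intro v hv
  rw [AddSubgroup.mem_bot]
  obtain ⟨r, hr, hrw⟩ := key (Y • v)
  have h0 : φ (σ r * σ t) • v = 0 := by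
    rw [map_mul, ← hXY, ← mul_assoc, ← hXr, mul_smul, mul_smul, hrw, smul_zero]
  have hs : σ r * σ t ∉ m := fun h => (hm.isPrime.mem_or_mem h).elim hr hmt
  obtain ⟨y, i, hi, hyi⟩ := hm.exists_inv hs
  have h1 : φ (y * (σ r * σ t) + i) • v = 0 := by
    rw [map_add, add_smul, map_mul, mul_smul, h0, smul_zero, hv i hi, add_zero]
  rwa [hyi, map_one, one_smul] at h1
end

section
/- Assume σ is essential. Let M be a weight A-module and m ∈ supp(M), and assume Y•M_m ≠ 0. Then there exists a unique maximal ideal n of R with σ(n) ⊆ m; moreover n ∈ supp(M) and Y•M_m ⊆ M_n. -/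
variable {R A M : Type*}

theorem stmt_6 [CommRing R] [Ring A] [AddCommGroup M] [Module A M]
    (φ : R →+* A) (σ : R →+* R) (t : R) (X Y : A)
    (hYX : Y * X = φ t) (hXY : X * Y = φ (σ t))
    (hXr : ∀ r : R, X * φ r = φ (σ r) * X)
    (hrY : ∀ r : R, φ r * Y = Y * φ (σ r))
    (hess : IsEssential σ)
    (hw : IsWeightModule (M := M) φ)
    (m : Ideal R) (hm : m.IsMaximal) (hsupp : weightSpace (M := M) φ m ≠ ⊥)
    (hY : ∃ v ∈ weightSpace (M := M) φ m, Y • v ≠ 0) :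
    ∃ n : Ideal R, n.IsMaximal ∧ (∀ r ∈ n, σ r ∈ m) ∧
      weightSpace (M := M) φ n ≠ ⊥ ∧
      (∀ v ∈ weightSpace (M := M) φ m, Y • v ∈ weightSpace (M := M) φ n) ∧
      ∀ n' : Ideal R, n'.IsMaximal → (∀ r ∈ n', σ r ∈ m) → n' = n := by
  have hle : ∀ v ∈ weightSpace (M := M) φ m,
      Y • v ∈ weightSpace (M := M) φ (m.comap σ) := by
    intro v hv r hr
    rw [← mul_smul, hrY, mul_smul, hv (σ r) (Ideal.mem_comap.mp hr), smul_zero]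
  have hmax : (m.comap σ).IsMaximal := by
    have hk : RingHom.ker ((Ideal.Quotient.mk m).comp σ) = m.comap σ := by
      ext r
      simp [RingHom.mem_ker, Ideal.Quotient.eq_zero_iff_mem]
    letI := Ideal.Quotient.field m
    rw [← hk]
    exact RingHom.ker_isMaximal_of_surjective ((Ideal.Quotient.mk m).comp σ) (hess m hm)
  refine ⟨m.comap σ, hmax, fun r hr => hr, ?_, hle, ?_⟩
  · obtain ⟨v, hv, hne⟩ := hY
    intro h
    have h1 := hle v hv
    rw [h] at h1
    exact hne (AddSubgroup.mem_bot.mp h1)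
  · intro n' hn' h
    exact hn'.eq_of_le hmax.ne_top (fun r hr => h r hr)
end

section
/- Assume A is generated as a ring by φ(R) ∪ {X, Y}. Then A = Σ_{i,j ≥ 0} Y^i · φ(R) · X^j; that is, every element of A is a finite sum of elements of the form Y^i · φ(r) · X^j with i, j ∈ ℤ_{≥0} and r ∈ R. -/
variable {R A M : Type*}

theorem stmt_9 [CommRing R] [Ring A]
    (φ : R →+* A) (σ : R →+* R) (t : R) (X Y : A)
    (hYX : Y * X = φ t) (hXY : X * Y = φ (σ t))
    (hXr : ∀ r : R, X * φ r = φ (σ r) * X)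
    (hrY : ∀ r : R, φ r * Y = Y * φ (σ r))
    (hgen : Subring.closure (Set.range φ ∪ {X, Y}) = ⊤) :
    ∀ a : A, a ∈ AddSubmonoid.closure
      {x : A | ∃ (i j : ℕ) (r : R), x = Y ^ i * φ r * X ^ j} := by
  set S := AddSubmonoid.closure
      {x : A | ∃ (i j : ℕ) (r : R), x = Y ^ i * φ r * X ^ j} with hS
  have hpow : ∀ (i : ℕ) (r : R), ∃ r' : R, φ r * Y ^ i = Y ^ i * φ r' := by
    intro i
    induction i with
    | zero => intro r; exact ⟨r, by simp⟩
    | succ n ih =>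
      intro r
      obtain ⟨r', h⟩ := ih r
      exact ⟨σ r', by rw [pow_succ, ← mul_assoc, h, mul_assoc, hrY, mul_assoc]⟩
  have ext : ∀ c : A, (∀ (i j : ℕ) (r : R), c * (Y ^ i * φ r * X ^ j) ∈ S) →
      ∀ b ∈ S, c * b ∈ S := by
    intro c hc b hb
    induction hb using AddSubmonoid.closure_induction with
    | mem x hx => obtain ⟨i, j, r, rfl⟩ := hx; exact hc i j r
    | zero => rw [mul_zero]; exact S.zero_mem
    | add x y _ _ hx hy => rw [mul_add]; exact S.add_mem hx hy
  have hmem : ∀ (i j : ℕ) (r : R), Y ^ i * φ r * X ^ j ∈ S := fun i j r =>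
    AddSubmonoid.subset_closure ⟨i, j, r, rfl⟩
  have hφ' : ∀ (s : R) (i j : ℕ) (r : R), φ s * (Y ^ i * φ r * X ^ j) ∈ S := by
    intro s i j r
    obtain ⟨r', h⟩ := hpow i s
    have : φ s * (Y ^ i * φ r * X ^ j) = Y ^ i * φ (r' * r) * X ^ j := by
      rw [← mul_assoc, ← mul_assoc, h, map_mul, mul_assoc (Y ^ i)]
    rw [this]; exact hmem _ _ _
  have hφ : ∀ s : R, ∀ b ∈ S, φ s * b ∈ S := fun s => ext _ (hφ' s)
  have hY : ∀ b ∈ S, Y * b ∈ S := by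
    refine ext _ fun i j r => ?_
    have : Y * (Y ^ i * φ r * X ^ j) = Y ^ (i + 1) * φ r * X ^ j := by
      rw [pow_succ']; simp only [mul_assoc]
    rw [this]; exact hmem _ _ _
  have hX : ∀ b ∈ S, X * b ∈ S := by
    refine ext _ fun i j r => ?_
    cases i with
    | zero =>
      have : X * (Y ^ 0 * φ r * X ^ j) = Y ^ 0 * φ (σ r) * X ^ (j + 1) := by
        rw [pow_zero, one_mul, one_mul, ← mul_assoc, hXr, mul_assoc, pow_succ']
      rw [this]; exact hmem _ _ _
    | succ i =>
      have : X * (Y ^ (i + 1) * φ r * X ^ j) = φ (σ t) * (Y ^ i * φ r * X ^ j) := by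
        rw [pow_succ', ← hXY]; simp only [mul_assoc]
      rw [this]; exact hφ' _ _ _ _
  have key : ∀ a ∈ Subring.closure (Set.range φ ∪ {X, Y}), ∀ b ∈ S, a * b ∈ S := by
    intro a ha
    induction ha using Subring.closure_induction with
    | mem x hx =>
      rcases hx with ⟨s, rfl⟩ | rfl | rfl
      · exact hφ s
      · exact hX
      · exact hY
    | zero => intro b _; rw [zero_mul]; exact S.zero_mem
    | one => intro b hb; rwa [one_mul]
    | add x y _ _ hx hy =>
      intro b hb; rw [add_mul]; exact S.add_mem (hx b hb) (hy b hb)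
    | neg x _ hx =>
      intro b hb
      have := hφ (-1) _ (hx b hb)
      simpa using this
    | mul x y _ _ hx hy => intro b hb; rw [mul_assoc]; exact hx _ (hy b hb)
  intro a
  have h1 : (1 : A) ∈ S := by simpa using hmem 0 0 1
  simpa using key a (by rw [hgen]; trivial) 1 h1
end

section
/- Assume σ is essential and A is generated as a ring by φ(R) ∪ {X, Y}. Let M be a simple weight A-module and let m ≠ n be two maximal ideals in supp(M). Then there exist k ∈ ℤ_{≥0} and maximal ideals k_1, …, k_k ∈ supp(M) such that either σ(m) ⊆ k_1, σ(k_j) ⊆ k_{j+1} for 1 ≤ j < k, and σ(k_k) ⊆ n (with σ(m) ⊆ n when k = 0), or the same chain condition holds with the roles of m and n interchanged. -/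
variable {R A M : Type*}

theorem aux_mem_iff [CommRing R] [Ring A] [AddCommGroup M] [Module A M]
    (φ : R →+* A) (m : Ideal R) (v : M) :
    v ∈ weightSpace (M := M) φ m ↔ ∀ r ∈ m, φ r • v = 0 := Iff.rfl

theorem aux_phi_mem [CommRing R] [Ring A] [AddCommGroup M] [Module A M]
    (φ : R →+* A) (m : Ideal R) (v : M) (hv : v ∈ weightSpace (M := M) φ m) (r : R) :
    φ r • v ∈ weightSpace (M := M) φ m := by
  intro s hs
  rw [← mul_smul, ← map_mul, mul_comm, map_mul, mul_smul, hv s hs, smul_zero]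

/-- The edge relation on the support. -/
def auxS (M : Type*) [CommRing R] [Ring A] [AddCommGroup M] [Module A M]
    (φ : R →+* A) (σ : R →+* R) (a b : Ideal R) : Prop :=
  (a.IsMaximal ∧ weightSpace (M := M) φ a ≠ ⊥) ∧
  (b.IsMaximal ∧ weightSpace (M := M) φ b ≠ ⊥) ∧ ∀ r ∈ a, σ r ∈ b

theorem aux_ne_bot [CommRing R] [Ring A] [AddCommGroup M] [Module A M]
    (φ : R →+* A) (m : Ideal R) (v : M) (hv : v ∈ weightSpace (M := M) φ m) (h0 : v ≠ 0) :
    weightSpace (M := M) φ m ≠ ⊥ := by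
  intro h
  rw [h] at hv
  exact h0 (AddSubgroup.mem_bot.1 hv)

theorem aux_comap_max [CommRing R] (σ : R →+* R) (hess : IsEssential σ) (n : Ideal R)
    (hn : n.IsMaximal) : (n.comap σ).IsMaximal := by
  have h : Function.Surjective ((Ideal.Quotient.mk n).comp σ) := hess n hn
  have hb : (⊥ : Ideal (R ⧸ n)).IsMaximal := Ideal.bot_quotient_isMaximal_iff n |>.2 hn
  have := Ideal.comap_isMaximal_of_surjective _ h (K := (⊥ : Ideal (R ⧸ n)))
  rw [← Ideal.comap_comap, ← RingHom.ker_eq_comap_bot, Ideal.mk_ker] at this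
  exact this

theorem aux_chain [CommRing R] [Ring A] [AddCommGroup M] [Module A M]
    (φ : R →+* A) (σ : R →+* R) (m n : Ideal R)
    (h : Relation.TransGen (auxS M φ σ) m n) :
    ∃ (k : ℕ) (c : ℕ → Ideal R), c 0 = m ∧ c (k + 1) = n ∧
      (∀ j, 1 ≤ j → j ≤ k → (c j).IsMaximal ∧ weightSpace (M := M) φ (c j) ≠ ⊥) ∧
      (∀ j ≤ k, ∀ r ∈ c j, σ r ∈ c (j + 1)) := by
  induction h using Relation.TransGen.head_induction_on with
  | single h =>
    rename_i a
    refine ⟨0, fun j => Nat.casesOn j a (fun _ => n), rfl, rfl, ?_, ?_⟩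
    · intro j h1 h2; omega
    · intro j hj
      obtain rfl : j = 0 := by omega
      exact h.2.2
  | head h htr ih =>
    rename_i a b
    obtain ⟨k, c, h0, h1, h2, h3⟩ := ih
    refine ⟨k + 1, fun j => Nat.casesOn j a c, rfl, h1, ?_, ?_⟩
    · intro j hj1 hj2
      obtain ⟨j, rfl⟩ : ∃ i, j = i + 1 := ⟨j - 1, by omega⟩
      rcases Nat.eq_zero_or_pos j with rfl | hp
      · change (c 0).IsMaximal ∧ weightSpace (M := M) φ (c 0) ≠ ⊥
        rw [h0]; exact h.2.1
      · exact h2 j hp (by omega)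
    · intro j hj
      rcases j with _ | j
      · change ∀ r ∈ a, σ r ∈ c 0
        rw [h0]; exact h.2.2
      · exact h3 j (by omega)

theorem aux_X [CommRing R] [Ring A] [AddCommGroup M] [Module A M]
    (φ : R →+* A) (σ : R →+* R) (X : A)
    (hXr : ∀ r : R, X * φ r = φ (σ r) * X)
    (hw : IsWeightModule (M := M) φ) (m : Ideal R) (hm : m.IsMaximal)
    (D : Ideal R → Prop) (hD : ∀ n, auxS M φ σ m n → D n)
    (v : M) (hv : v ∈ weightSpace (M := M) φ m) :
    X • v ∈ ⨆ k : {k : Ideal R // D k}, weightSpace (M := M) φ k.1 := by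
  classical
  by_cases hv0 : v = 0
  · rw [hv0, smul_zero]; exact zero_mem _
  have hmem : X • v ∈ ⨆ m : {m : Ideal R // m.IsMaximal}, weightSpace (M := M) φ m.1 := by
    rw [hw.1]; trivial
  have hrange : (⨆ m : {m : Ideal R // m.IsMaximal}, weightSpace (M := M) φ m.1) ≤
      (DFinsupp.sumAddHom (fun i : {m : Ideal R // m.IsMaximal} =>
        (weightSpace (M := M) φ i.1).subtype)).range := by
    refine iSup_le fun i y hy => ?_
    exact ⟨DFinsupp.single i ⟨y, hy⟩, DFinsupp.sumAddHom_single _ _ _⟩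
  obtain ⟨f, hf⟩ := hrange hmem
  have key : ∀ r ∈ m, ∀ i, φ (σ r) • (f i : M) = 0 := by
    intro r hr i
    let T : ∀ i : {m : Ideal R // m.IsMaximal},
        weightSpace (M := M) φ i.1 →+ weightSpace (M := M) φ i.1 := fun i =>
      { toFun := fun w => ⟨φ (σ r) • (w : M), aux_phi_mem φ i.1 (w : M) w.2 _⟩
        map_zero' := by ext; simp
        map_add' := by intro a b; ext; simp }
    have h1 : DFinsupp.sumAddHom (fun i : {m : Ideal R // m.IsMaximal} =>
        (weightSpace (M := M) φ i.1).subtype) (DFinsupp.mapRange.addMonoidHom T f)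
        = φ (σ r) • (X • v) := by
      rw [← hf]
      have : (DFinsupp.sumAddHom (fun i : {m : Ideal R // m.IsMaximal} =>
        (weightSpace (M := M) φ i.1).subtype)).comp (DFinsupp.mapRange.addMonoidHom T)
        = (DistribSMul.toAddMonoidHom M (φ (σ r))).comp
          (DFinsupp.sumAddHom (fun i : {m : Ideal R // m.IsMaximal} =>
        (weightSpace (M := M) φ i.1).subtype)) := by
        ext i w
        simp [T]
      exact DFunLike.congr_fun this f
    rw [← mul_smul, ← hXr, mul_smul, hv r hr, smul_zero] at h1
    have h2 := hw.2.dfinsuppSumAddHom_injective (h1.trans (map_zero _).symm)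
    have h3 := DFunLike.congr_fun h2 i
    exact congrArg Subtype.val h3
  rw [← hf, DFinsupp.sumAddHom_apply, DFinsupp.sum]
  refine sum_mem fun i hi => ?_
  have hfi : (f i : M) ≠ 0 := by
    intro h
    exact (DFinsupp.mem_support_iff.1 hi) (Subtype.ext h)
  have hS : auxS M φ σ m i.1 := by
    refine ⟨⟨hm, aux_ne_bot φ m v hv hv0⟩, ⟨i.2, aux_ne_bot φ i.1 _ (f i).2 hfi⟩, ?_⟩
    intro r hr
    by_contra hn
    obtain ⟨s, hs⟩ := i.2.exists_inv hn
    obtain ⟨u, hu, hsu⟩ := hs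
    apply hfi
    have : φ (s * σ r + u) • (f i : M) = 0 := by
      rw [map_add, add_smul, (f i).2 u hu, map_mul, mul_smul, key r hr i, smul_zero, add_zero]
    rwa [hsu, map_one, one_smul] at this
  exact AddSubgroup.mem_iSup_of_mem (⟨i.1, hD _ hS⟩ : {k : Ideal R // D k}) (f i).2

theorem aux_Y [CommRing R] [Ring A] [AddCommGroup M] [Module A M]
    (φ : R →+* A) (σ : R →+* R) (Y : A)
    (hrY : ∀ r : R, φ r * Y = Y * φ (σ r)) (n : Ideal R)
    (v : M) (hv : v ∈ weightSpace (M := M) φ n) :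
    Y • v ∈ weightSpace (M := M) φ (n.comap σ) := by
  intro r hr
  rw [← mul_smul, hrY, mul_smul, hv _ hr, smul_zero]

theorem aux_Ypow [CommRing R] [Ring A] [AddCommGroup M] [Module A M]
    (φ : R →+* A) (σ : R →+* R) (Y : A) (hess : IsEssential σ)
    (hrY : ∀ r : R, φ r * Y = Y * φ (σ r)) (m : Ideal R) (hm : m.IsMaximal)
    (v : M) (hv : v ∈ weightSpace (M := M) φ m) (j : ℕ) (h0 : Y ^ j • v ≠ 0) :
    ∃ e : Ideal R, e.IsMaximal ∧ Y ^ j • v ∈ weightSpace (M := M) φ e ∧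
      Relation.ReflTransGen (auxS M φ σ) e m := by
  induction j with
  | zero => exact ⟨m, hm, by simpa using hv, .refl⟩
  | succ j ih =>
    rw [pow_succ', mul_smul] at h0 ⊢
    have h1 : Y ^ j • v ≠ 0 := by
      intro h; rw [h, smul_zero] at h0; exact h0 rfl
    obtain ⟨e, he, hmem, hr⟩ := ih h1
    have hY := aux_Y φ σ Y hrY e _ hmem
    have hmax := aux_comap_max σ hess e he
    exact ⟨e.comap σ, hmax, hY, .head ⟨⟨hmax, aux_ne_bot φ _ _ hY h0⟩,
      ⟨he, aux_ne_bot φ _ _ hmem h1⟩, fun r hr => hr⟩ hr⟩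

theorem aux_main [CommRing R] [Ring A] [AddCommGroup M] [Module A M]
    (φ : R →+* A) (σ : R →+* R) (t : R) (X Y : A)
    (hXY : X * Y = φ (σ t))
    (hXr : ∀ r : R, X * φ r = φ (σ r) * X)
    (hrY : ∀ r : R, φ r * Y = Y * φ (σ r))
    (hess : IsEssential σ)
    (hgen : Subring.closure (Set.range φ ∪ {X, Y}) = ⊤)
    (hw : IsWeightModule (M := M) φ)
    (hsimple : IsSimpleModule A M)
    (m : Ideal R)
    (hm : m.IsMaximal) (hmsupp : weightSpace (M := M) φ m ≠ ⊥) :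
    (⨆ k : {k : Ideal R // k.IsMaximal ∧ (Relation.ReflTransGen (auxS M φ σ) m k ∨
      Relation.ReflTransGen (auxS M φ σ) k m)}, weightSpace (M := M) φ k.1) = ⊤ := by
  let D : Ideal R → Prop := fun k => Relation.ReflTransGen (auxS M φ σ) m k
  have hDmax : ∀ k, D k → k.IsMaximal := by
    intro k hk
    rcases Relation.ReflTransGen.cases_tail hk with rfl | ⟨b, _, hb⟩
    · exact hm
    · exact hb.2.1.1
  let sm : A → (M →+ M) := fun a => DistribSMul.toAddMonoidHom M a
  let N1 : AddSubgroup M := ⨆ k : {k : Ideal R // D k}, weightSpace (M := M) φ k.1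
  let N2 : AddSubgroup M := ⨆ j : ℕ, (weightSpace (M := M) φ m).map (sm (Y ^ j))
  let N : AddSubgroup M := N1 ⊔ N2
  have hN1 : ∀ k, D k → ∀ w ∈ weightSpace (M := M) φ k, w ∈ N := fun k hk w hw =>
    (le_sup_left : N1 ≤ N) (AddSubgroup.mem_iSup_of_mem (⟨k, hk⟩ : {k : Ideal R // D k}) hw)
  have hN2 : ∀ j, ∀ w ∈ weightSpace (M := M) φ m, Y ^ j • w ∈ N := fun j w hw =>
    (le_sup_right : N2 ≤ N) (AddSubgroup.mem_iSup_of_mem j ⟨w, hw, rfl⟩)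
  have hle : ∀ P : AddSubgroup M, (∀ k, D k → ∀ w ∈ weightSpace (M := M) φ k, w ∈ P) →
      (∀ j, ∀ w ∈ weightSpace (M := M) φ m, Y ^ j • w ∈ P) → N ≤ P := by
    intro P h1 h2
    refine sup_le (iSup_le fun k => h1 k.1 k.2) (iSup_le fun j => ?_)
    rintro _ ⟨w, hw, rfl⟩
    exact h2 j w hw
  have hphiY : ∀ (j : ℕ) (r : R), ∃ s, φ r * Y ^ j = Y ^ j * φ s := by
    intro j
    induction j with
    | zero => intro r; exact ⟨r, by simp⟩
    | succ j ih =>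
      intro r
      obtain ⟨s, hs⟩ := ih r
      exact ⟨σ s, by rw [pow_succ, ← mul_assoc, hs, mul_assoc, hrY, mul_assoc]⟩
  have hphi : ∀ r, ∀ w ∈ N, φ r • w ∈ N := by
    intro r
    refine hle (N.comap (sm (φ r))) (fun k hk w hw => ?_) (fun j w hw => ?_)
    · exact hN1 k hk _ (aux_phi_mem φ k w hw r)
    · change φ r • Y ^ j • w ∈ N
      obtain ⟨s, hs⟩ := hphiY j r
      rw [← mul_smul, hs, mul_smul]
      exact hN2 j _ (aux_phi_mem φ m w hw s)
  have hXD : ∀ k, D k → ∀ w ∈ weightSpace (M := M) φ k, X • w ∈ N := fun k hk w hw' =>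
    (le_sup_left : N1 ≤ N) (aux_X φ σ X hXr hw k (hDmax k hk) D
      (fun n hn => Relation.ReflTransGen.tail hk hn) w hw')
  have hX : ∀ w ∈ N, X • w ∈ N := by
    refine hle (N.comap (sm X)) hXD (fun j w hw => ?_)
    change X • Y ^ j • w ∈ N
    rcases j with _ | j
    · rw [pow_zero, one_smul]; exact hXD m .refl w hw
    · rw [← mul_smul, pow_succ', ← mul_assoc, hXY, mul_smul]
      exact hphi _ _ (hN2 j w hw)
  have hY : ∀ w ∈ N, Y • w ∈ N := by
    refine hle (N.comap (sm Y)) (fun k hk w hw => ?_) (fun j w hw => ?_)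
    · change Y • w ∈ N
      rcases Relation.ReflTransGen.cases_tail hk with rfl | ⟨b, hb, hbk⟩
      · simpa using hN2 1 w hw
      · have h1 := aux_Y φ σ Y hrY k w hw
        have h2 : b = k.comap σ :=
          hbk.1.1.eq_of_le (aux_comap_max σ hess k hbk.2.1.1).ne_top hbk.2.2
        rw [← h2] at h1
        exact hN1 b hb _ h1
    · change Y • Y ^ j • w ∈ N
      rw [← mul_smul, ← pow_succ']
      exact hN2 _ w hw
  have hall : ∀ a : A, ∀ w ∈ N, a • w ∈ N := by
    intro a
    have ha : a ∈ Subring.closure (Set.range φ ∪ {X, Y}) := by rw [hgen]; trivial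
    induction ha using Subring.closure_induction with
    | mem x hx =>
      rcases hx with ⟨r, rfl⟩ | rfl | rfl
      · exact hphi r
      · exact hX
      · exact hY
    | zero => intro w _; rw [zero_smul]; exact zero_mem _
    | one => intro w hw; rwa [one_smul]
    | add x y _ _ hx hy => intro w hw; rw [add_smul]; exact add_mem (hx w hw) (hy w hw)
    | neg x _ hx => intro w hw; rw [neg_smul]; exact neg_mem (hx w hw)
    | mul x y _ _ hx hy => intro w hw; rw [mul_smul]; exact hx _ (hy w hw)
  let NS : Submodule A M :=
    { N with smul_mem' := fun a w hw => hall a w hw }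
  have hNS : NS = ⊤ := by
    rcases eq_bot_or_eq_top NS with h | h
    · exfalso
      apply hmsupp
      rw [eq_bot_iff]
      intro w hw
      have : w ∈ NS := hN1 m .refl w hw
      rw [h] at this
      exact this
    · exact h
  rw [eq_top_iff]
  intro w _
  have hwN : w ∈ N := by
    have : w ∈ NS := by rw [hNS]; trivial
    exact this
  refine hle _ (fun k hk w hw => ?_) (fun j w hw => ?_) hwN
  · exact AddSubgroup.mem_iSup_of_mem (⟨k, hDmax k hk, .inl hk⟩ :
      {k : Ideal R // k.IsMaximal ∧ (Relation.ReflTransGen (auxS M φ σ) m k ∨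
      Relation.ReflTransGen (auxS M φ σ) k m)}) hw
  · by_cases h0 : Y ^ j • w = 0
    · rw [h0]; exact zero_mem _
    · obtain ⟨e, he, hmem, hr⟩ := aux_Ypow φ σ Y hess hrY m hm w hw j h0
      exact AddSubgroup.mem_iSup_of_mem (⟨e, he, .inr hr⟩ :
        {k : Ideal R // k.IsMaximal ∧ (Relation.ReflTransGen (auxS M φ σ) m k ∨
        Relation.ReflTransGen (auxS M φ σ) k m)}) hmem

theorem stmt_11 [CommRing R] [Ring A] [AddCommGroup M] [Module A M]
    (φ : R →+* A) (σ : R →+* R) (t : R) (X Y : A)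
    (hYX : Y * X = φ t) (hXY : X * Y = φ (σ t))
    (hXr : ∀ r : R, X * φ r = φ (σ r) * X)
    (hrY : ∀ r : R, φ r * Y = Y * φ (σ r))
    (hess : IsEssential σ)
    (hgen : Subring.closure (Set.range φ ∪ {X, Y}) = ⊤)
    (hw : IsWeightModule (M := M) φ)
    (hsimple : IsSimpleModule A M)
    (m n : Ideal R) (hmn : m ≠ n)
    (hm : m.IsMaximal) (hmsupp : weightSpace (M := M) φ m ≠ ⊥)
    (hn : n.IsMaximal) (hnsupp : weightSpace (M := M) φ n ≠ ⊥) :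
    (∃ (k : ℕ) (c : ℕ → Ideal R), c 0 = m ∧ c (k + 1) = n ∧
      (∀ j, 1 ≤ j → j ≤ k → (c j).IsMaximal ∧ weightSpace (M := M) φ (c j) ≠ ⊥) ∧
      (∀ j ≤ k, ∀ r ∈ c j, σ r ∈ c (j + 1))) ∨
    (∃ (k : ℕ) (c : ℕ → Ideal R), c 0 = n ∧ c (k + 1) = m ∧
      (∀ j, 1 ≤ j → j ≤ k → (c j).IsMaximal ∧ weightSpace (M := M) φ (c j) ≠ ⊥) ∧
      (∀ j ≤ k, ∀ r ∈ c j, σ r ∈ c (j + 1))) := by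
  have htop := aux_main φ σ t X Y hXY hXr hrY hess hgen hw hsimple m hm hmsupp
  have hcase : Relation.ReflTransGen (auxS M φ σ) m n ∨
      Relation.ReflTransGen (auxS M φ σ) n m := by
    by_contra hcon
    have hd := hw.2 ⟨n, hn⟩
    apply hnsupp
    rw [eq_bot_iff]
    refine hd le_rfl (le_trans le_top ?_)
    rw [← htop]
    refine iSup_le fun k => ?_
    have hk : (⟨k.1, k.2.1⟩ : {m : Ideal R // m.IsMaximal}) ≠ ⟨n, hn⟩ := by
      intro h
      have h' : k.1 = n := congrArg Subtype.val h
      exact hcon (h' ▸ k.2.2)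
    exact le_iSup₂_of_le (f := fun (j : {m : Ideal R // m.IsMaximal}) (_ : j ≠ ⟨n, hn⟩) =>
      weightSpace (M := M) φ j.1) ⟨k.1, k.2.1⟩ hk le_rfl
  rcases hcase with h | h
  · left
    rcases Relation.reflTransGen_iff_eq_or_transGen.1 h with h | h
    · exact absurd h.symm hmn
    · exact aux_chain φ σ m n h
  · right
    rcases Relation.reflTransGen_iff_eq_or_transGen.1 h with h | h
    · exact absurd h hmn
    · exact aux_chain φ σ n m h
end

section
/- Assume σ is essential and A is generated as a ring by φ(R) ∪ {X, Y}. Let M be a simple weight A-module. Then there exist a subset I ⊆ ℤ which is either all of ℤ, or {i ∈ ℤ : i ≥ 0}, or {i ∈ ℤ : i ≤ 0}, or {0, 1, …, n} for some n ∈ ℤ_{≥0}, and a family (m_i)_{i∈I} of maximal ideals of R such that: σ(m_i) ⊆ m_{i+1} whenever i and i+1 both lie in I; if I has a least element i₀ then σ(t) ∈ m_{i₀}; if I has a greatest element i₁ then t ∈ m_{i₁}; and supp(M) ⊆ {m_i : i ∈ I}. -/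
variable {R A M : Type*}

/-- Sum of the weight spaces over the maximal ideals satisfying `p`. -/
def wsum [CommRing R] [Ring A] [AddCommGroup M] [Module A M]
    (φ : R →+* A) (p : Ideal R → Prop) : AddSubgroup M :=
  ⨆ m : {m : Ideal R // m.IsMaximal ∧ p m}, weightSpace (M := M) φ m.1

theorem mem_wsum [CommRing R] [Ring A] [AddCommGroup M] [Module A M]
    (φ : R →+* A) {p : Ideal R → Prop} {m : Ideal R} (hm : m.IsMaximal) (hp : p m)
    {v : M} (hv : v ∈ weightSpace (M := M) φ m) : v ∈ wsum (M := M) φ p :=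
  (le_iSup (fun m : {m : Ideal R // m.IsMaximal ∧ p m} => weightSpace (M := M) φ m.1)
    ⟨m, hm, hp⟩) hv

theorem wsum_le [CommRing R] [Ring A] [AddCommGroup M] [Module A M]
    (φ : R →+* A) {p : Ideal R → Prop} {N : AddSubgroup M}
    (h : ∀ m : Ideal R, m.IsMaximal → p m → weightSpace (M := M) φ m ≤ N) :
    wsum (M := M) φ p ≤ N :=
  iSup_le fun m => h m.1 m.2.1 m.2.2

theorem weight_ann [CommRing R] [Ring A] [AddCommGroup M] [Module A M]
    (φ : R →+* A) {m : Ideal R} (hm : m.IsMaximal) {v : M}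
    (hv : v ∈ weightSpace (M := M) φ m) (hv0 : v ≠ 0) {r : R} (hr : φ r • v = 0) : r ∈ m := by
  by_contra h
  obtain ⟨a, b, hb, hab⟩ := hm.exists_inv h
  apply hv0
  have h1 : φ (a * r + b) • v = 0 := by
    rw [map_add, map_mul, add_smul, mul_smul, hr, smul_zero, hv b hb, add_zero]
  rwa [hab, map_one, one_smul] at h1

theorem killed_mem [CommRing R] [Ring A] [AddCommGroup M] [Module A M]
    (φ : R →+* A) (hw : IsWeightModule (M := M) φ) (J : Set R) (u : M)
    (hu : ∀ r ∈ J, φ r • u = 0) : u ∈ wsum (M := M) φ (fun n => J ⊆ (n : Set R)) := by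
  classical
  obtain ⟨htop, hind⟩ := hw
  let W : {m : Ideal R // m.IsMaximal} → AddSubgroup M := fun m => weightSpace (M := M) φ m.1
  have hinj := iSupIndep.dfinsuppSumAddHom_injective hind
  have hex : ∃ d : Π₀ i, W i, DFinsupp.sumAddHom (fun i => (W i).subtype) d = u := by
    have hmem : u ∈ ⨆ m : {m : Ideal R // m.IsMaximal}, weightSpace (M := M) φ m.1 := by
      rw [htop]; trivial
    refine AddSubgroup.iSup_induction _ (C := fun u => ∃ d : Π₀ i, W i,
      DFinsupp.sumAddHom (fun i => (W i).subtype) d = u) hmem ?_ ?_ ?_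
    · intro i x hx
      exact ⟨DFinsupp.single i ⟨x, hx⟩, by simp⟩
    · exact ⟨0, by simp⟩
    · rintro x y ⟨d, hd⟩ ⟨e, he⟩
      exact ⟨d + e, by rw [map_add, hd, he]⟩
  obtain ⟨d, rfl⟩ := hex
  have hst : ∀ (r : R) (i), ∀ v ∈ W i, φ r • v ∈ W i := by
    intro r i v hv s hs
    rw [← mul_smul, ← map_mul, mul_comm, map_mul, mul_smul, hv s hs, smul_zero]
  have hk : ∀ r ∈ J, ∀ i, φ r • (d i : M) = 0 := by
    intro r hr i
    let g : ∀ i, W i →+ W i := fun i =>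
      { toFun := fun v => ⟨φ r • (v : M), hst r i v v.2⟩
        map_zero' := by ext; simp
        map_add' := by intro a b; ext; simp }
    have h0 : DFinsupp.sumAddHom (fun i => (W i).subtype) (DFinsupp.mapRange.addMonoidHom g d) = 0 := by
      rw [← hu r hr]
      have : (DFinsupp.sumAddHom (fun i => (W i).subtype)).comp (DFinsupp.mapRange.addMonoidHom g)
        = (DistribSMul.toAddMonoidHom M (φ r)).comp (DFinsupp.sumAddHom (fun i => (W i).subtype)) := by
        ext i x
        simp [g]
      exact DFunLike.congr_fun this d
    have h1 : DFinsupp.mapRange.addMonoidHom g d = 0 := hinj (by rw [map_zero]; exact h0)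
    have h2 := DFunLike.congr_fun h1 i
    have h3 := congrArg (Subtype.val) h2
    simpa [g] using h3
  rw [DFinsupp.sumAddHom_apply]
  refine sum_mem ?_
  intro i _
  by_cases h0 : (d i : M) = 0
  · simp [h0, zero_mem]
  · exact mem_wsum φ i.2 (fun r hr => weight_ann φ i.2 (d i).2 h0 (hk r hr i)) (d i).2

section
variable [CommRing R] [Ring A] [AddCommGroup M] [Module A M]

theorem comap_max {σ : R →+* R} (hess : IsEssential σ) {m : Ideal R} (hm : m.IsMaximal) :
    (m.comap σ).IsMaximal := by
  have h := hess m hm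
  have hb : (⊥ : Ideal (R ⧸ m)).IsMaximal := by
    let _ := Ideal.Quotient.field m
    exact Ideal.bot_isMaximal
  have := Ideal.comap_isMaximal_of_surjective ((Ideal.Quotient.mk m).comp σ) h (K := ⊥)
  rw [← Ideal.comap_comap] at this
  have e : (⊥ : Ideal (R ⧸ m)).comap (Ideal.Quotient.mk m) = m := by
    rw [← RingHom.ker_eq_comap_bot, Ideal.mk_ker]
  rwa [e] at this

theorem iter_max {σ : R →+* R} (hess : IsEssential σ) {m : Ideal R} (hm : m.IsMaximal) (k : ℕ) :
    ((Ideal.comap σ)^[k] m).IsMaximal := by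
  induction k with
  | zero => exact hm
  | succ k ih => rw [Function.iterate_succ_apply']; exact comap_max hess ih

theorem X_mem (φ : R →+* A) (σ : R →+* R) (X : A)
    (hXr : ∀ r : R, X * φ r = φ (σ r) * X)
    (hess : IsEssential σ) (hw : IsWeightModule (M := M) φ)
    {m : Ideal R} (hm : m.IsMaximal) {v : M} (hv : v ∈ weightSpace (M := M) φ m) :
    X • v ∈ wsum (M := M) φ (fun n => n.comap σ = m) := by
  have h := killed_mem φ hw (Set.image σ (m : Set R)) (X • v) (by
    rintro _ ⟨r, hr, rfl⟩
    rw [← mul_smul, ← hXr, mul_smul, hv r hr, smul_zero])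
  refine wsum_le φ (fun n hn hp v hv => ?_) h
  refine mem_wsum φ hn ?_ hv
  refine (hm.eq_of_le (comap_max hess hn).ne_top ?_).symm
  intro r hr
  exact hp ⟨r, hr, rfl⟩

theorem Y_mem (φ : R →+* A) (σ : R →+* R) (Y : A)
    (hrY : ∀ r : R, φ r * Y = Y * φ (σ r))
    {m : Ideal R} {v : M} (hv : v ∈ weightSpace (M := M) φ m) :
    Y • v ∈ weightSpace (M := M) φ (m.comap σ) := by
  intro r hr
  rw [← mul_smul, hrY, mul_smul, hv (σ r) hr, smul_zero]

theorem smul_weight (φ : R →+* A) (r : R)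
    {m : Ideal R} {v : M} (hv : v ∈ weightSpace (M := M) φ m) :
    φ r • v ∈ weightSpace (M := M) φ m := by
  intro s hs
  rw [← mul_smul, ← map_mul, mul_comm, map_mul, mul_smul, hv s hs, smul_zero]

theorem Ypow_mem (φ : R →+* A) (σ : R →+* R) (Y : A)
    (hrY : ∀ r : R, φ r * Y = Y * φ (σ r))
    {m : Ideal R} {v : M} (hv : v ∈ weightSpace (M := M) φ m) (k : ℕ) :
    Y ^ k • v ∈ weightSpace (M := M) φ ((Ideal.comap σ)^[k] m) := by
  induction k with
  | zero => simpa using hv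
  | succ k ih =>
    rw [Function.iterate_succ_apply', pow_succ', mul_smul]
    exact Y_mem φ σ Y hrY ih

theorem smul_Ypow (φ : R →+* A) (σ : R →+* R) (Y : A)
    (hrY : ∀ r : R, φ r * Y = Y * φ (σ r)) (k : ℕ) (r : R) :
    φ r * Y ^ k = Y ^ k * φ (σ^[k] r) := by
  induction k generalizing r with
  | zero => simp
  | succ k ih =>
    rw [pow_succ', ← mul_assoc, hrY, mul_assoc, ih, ← mul_assoc, Function.iterate_succ_apply]

/-- The additive subgroup generated by all weights above `m` and all `Y ^ k M_m`. -/
def conePart (M : Type*) [AddCommGroup M] [Module A M]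
    (φ : R →+* A) (σ : R →+* R) (Y : A) (m : Ideal R) : AddSubgroup M :=
  wsum (M := M) φ (fun n => ∃ k : ℕ, (Ideal.comap σ)^[k] n = m) ⊔
    AddSubgroup.closure {w : M | ∃ (k : ℕ), ∃ v ∈ weightSpace (M := M) φ m, w = Y ^ k • v}

theorem conePart_stable (φ : R →+* A) (σ : R →+* R) (t : R) (X Y : A)
    (hXY : X * Y = φ (σ t))
    (hXr : ∀ r : R, X * φ r = φ (σ r) * X)
    (hrY : ∀ r : R, φ r * Y = Y * φ (σ r))
    (hess : IsEssential σ)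
    (hgen : Subring.closure (Set.range φ ∪ {X, Y}) = ⊤)
    (hw : IsWeightModule (M := M) φ)
    {m : Ideal R} (hm : m.IsMaximal) (a : A) :
    ∀ v ∈ conePart M φ σ Y m, a • v ∈ conePart M φ σ Y m := by
  set P := conePart M φ σ Y m with hP
  have hup : ∀ n : Ideal R, n.IsMaximal → ∀ k : ℕ, (Ideal.comap σ)^[k] n = m →
      ∀ v ∈ weightSpace (M := M) φ n, v ∈ P := fun n hn k hk v hv =>
    (le_sup_left : _ ≤ P) (mem_wsum φ (p := fun n => ∃ k : ℕ, (Ideal.comap σ)^[k] n = m) hn ⟨k, hk⟩ hv)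
  have hdn : ∀ k : ℕ, ∀ v ∈ weightSpace (M := M) φ m, Y ^ k • v ∈ P := fun k v hv =>
    (le_sup_right : _ ≤ P) (AddSubgroup.subset_closure ⟨k, v, hv, rfl⟩)
  have key : ∀ a : A,
      (∀ n : Ideal R, n.IsMaximal → ∀ k : ℕ, (Ideal.comap σ)^[k] n = m →
        ∀ v ∈ weightSpace (M := M) φ n, a • v ∈ P) →
      (∀ k : ℕ, ∀ v ∈ weightSpace (M := M) φ m, a • Y ^ (k + 1) • v ∈ P) →
      ∀ v ∈ P, a • v ∈ P := by
    intro a h1 h2 v hv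
    have : P ≤ P.comap (DistribSMul.toAddMonoidHom M a) := by
      conv_lhs => rw [hP]
      refine sup_le (wsum_le φ ?_) ((AddSubgroup.closure_le _).2 ?_)
      · rintro n hn ⟨k, hk⟩ v hv
        exact h1 n hn k hk v hv
      · rintro _ ⟨k, v, hv, rfl⟩
        cases k with
        | zero => simpa using h1 m hm 0 rfl v hv
        | succ k => exact h2 k v hv
    exact this hv
  have ha : a ∈ Subring.closure (Set.range φ ∪ {X, Y}) := by rw [hgen]; trivial
  induction ha using Subring.closure_induction with
  | mem x hx =>
    apply key
    · intro n hn k hk v hv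
      rcases hx with ⟨r, rfl⟩ | rfl | rfl
      · exact hup n hn k hk _ (smul_weight φ r hv)
      · refine wsum_le φ ?_ (X_mem φ σ x hXr hess hw hn hv)
        intro n' hn' hnn' w hw'
        exact hup n' hn' (k + 1) (by rw [Function.iterate_succ_apply, hnn', hk]) w hw'
      · cases k with
        | zero =>
          have hnm : n = m := hk
          subst hnm
          simpa using hdn 1 v hv
        | succ k =>
          exact hup _ (comap_max hess hn) k (by rw [← hk, Function.iterate_succ_apply]) _
            (Y_mem φ σ x hrY hv)
    · intro k v hv
      rcases hx with ⟨r, rfl⟩ | rfl | rfl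
      · rw [← mul_smul, smul_Ypow φ σ Y hrY, mul_smul]
        exact hdn _ _ (smul_weight φ _ hv)
      · rw [pow_succ', mul_smul, ← mul_smul, hXY, ← mul_smul, smul_Ypow φ σ Y hrY, mul_smul]
        exact hdn _ _ (smul_weight φ _ hv)
      · rw [← mul_smul, ← pow_succ']
        exact hdn _ _ hv
  | zero => intro v _; rw [zero_smul]; exact zero_mem _
  | one => intro v hv; rwa [one_smul]
  | add x y _ _ hx hy => intro v hv; rw [add_smul]; exact add_mem (hx v hv) (hy v hv)
  | neg x _ hx => intro v hv; rw [neg_smul]; exact neg_mem (hx v hv)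
  | mul x y _ _ hx hy => intro v hv; rw [mul_smul]; exact hx _ (hy v hv)

theorem supp_cone (φ : R →+* A) (σ : R →+* R) (t : R) (X Y : A)
    (hXY : X * Y = φ (σ t))
    (hXr : ∀ r : R, X * φ r = φ (σ r) * X)
    (hrY : ∀ r : R, φ r * Y = Y * φ (σ r))
    (hess : IsEssential σ)
    (hgen : Subring.closure (Set.range φ ∪ {X, Y}) = ⊤)
    (hw : IsWeightModule (M := M) φ)
    (hsimple : IsSimpleModule A M)
    {m n : Ideal R} (hm : m.IsMaximal) (hn : n.IsMaximal)
    (hm0 : weightSpace (M := M) φ m ≠ ⊥) (hn0 : weightSpace (M := M) φ n ≠ ⊥) :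
    (∃ k : ℕ, (Ideal.comap σ)^[k] n = m) ∨ ∃ k : ℕ, (Ideal.comap σ)^[k] m = n := by
  by_contra hcon
  push Not at hcon
  obtain ⟨hc1, hc2⟩ := hcon
  let N : Submodule A M :=
    { conePart M φ σ Y m with
      smul_mem' := fun a v hv =>
        conePart_stable φ σ t X Y hXY hXr hrY hess hgen hw hm a v hv }
  have hNle : weightSpace (M := M) φ m ≤ conePart M φ σ Y m := fun v hv =>
    (le_sup_left : _ ≤ conePart M φ σ Y m)
      (mem_wsum φ (p := fun n => ∃ k : ℕ, (Ideal.comap σ)^[k] n = m) hm ⟨0, rfl⟩ hv)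
  have htop : ∀ v : M, v ∈ conePart M φ σ Y m := by
    rcases eq_bot_or_eq_top N with h | h
    · exfalso
      apply hm0
      rw [eq_bot_iff]
      intro v hv
      have : v ∈ N := hNle hv
      rw [h] at this
      simpa using this
    · intro v
      have : v ∈ N := by rw [h]; trivial
      exact this
  apply hn0
  have hdis := hw.2 ⟨n, hn⟩
  rw [eq_bot_iff]
  refine hdis le_rfl ?_
  refine le_trans (fun v _ => htop v) ?_
  have hle : ∀ n' : Ideal R, n'.IsMaximal → n' ≠ n → weightSpace (M := M) φ n' ≤
      ⨆ j : {m : Ideal R // m.IsMaximal}, ⨆ (_ : j ≠ ⟨n, hn⟩), weightSpace (M := M) φ j.1 := by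
    intro n' hn' hne
    exact le_iSup₂_of_le (f := fun (j : {m : Ideal R // m.IsMaximal}) (_ : j ≠ ⟨n, hn⟩) =>
      weightSpace (M := M) φ j.1) ⟨n', hn'⟩ (fun h => hne (congrArg Subtype.val h)) le_rfl
  refine sup_le (wsum_le φ ?_) ((AddSubgroup.closure_le _).2 ?_)
  · rintro n' hn' ⟨k, hk⟩
    refine hle n' hn' ?_
    rintro rfl
    exact hc1 k hk
  · rintro _ ⟨k, v, hv, rfl⟩
    exact hle _ (iter_max hess hm k) (hc2 k) (Ypow_mem φ σ Y hrY hv k)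

theorem exists_above (φ : R →+* A) (σ : R →+* R) (t : R) (X Y : A)
    (hYX : Y * X = φ t)
    (hXr : ∀ r : R, X * φ r = φ (σ r) * X)
    (hess : IsEssential σ)
    (hw : IsWeightModule (M := M) φ)
    {m : Ideal R} (hm : m.IsMaximal)
    (hm0 : weightSpace (M := M) φ m ≠ ⊥) (ht : t ∉ m) :
    ∃ n : Ideal R, n.IsMaximal ∧ weightSpace (M := M) φ n ≠ ⊥ ∧ n.comap σ = m := by
  by_contra hcon
  push Not at hcon
  apply hm0
  rw [eq_bot_iff]
  intro v hv
  by_contra hv0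
  apply ht
  refine weight_ann φ hm hv hv0 ?_
  have hX : X • v ∈ (⊥ : AddSubgroup M) := by
    refine wsum_le φ ?_ (X_mem φ σ X hXr hess hw hm hv)
    intro n hn hnm
    by_contra h
    exact hcon n hn (fun h' => h h'.le) hnm
  rw [AddSubgroup.mem_bot] at hX
  rw [← hYX, mul_smul, hX, smul_zero]

end

/-- Extending an upward infinite chain to a chain indexed by `ℤ`. -/
theorem int_chain {α : Type*} (f : α → α) (c : ℕ → α) (hc : ∀ n, f (c (n + 1)) = c n) (i : ℤ) :
    f (f^[(-(i + 1)).toNat] (c (i + 1).toNat)) = f^[(-i).toNat] (c i.toNat) := by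
  rcases lt_or_ge i 0 with h | h
  · have h1 : (i + 1).toNat = 0 := by omega
    have h2 : i.toNat = 0 := by omega
    have h3 : (-i).toNat = (-(i + 1)).toNat + 1 := by omega
    rw [h1, h2, h3, Function.iterate_succ_apply']
  · have h1 : (i + 1).toNat = i.toNat + 1 := by omega
    have h2 : (-i).toNat = 0 := by omega
    have h3 : (-(i + 1)).toNat = 0 := by omega
    rw [h1, h2, h3]
    exact hc _

/-- A sequence with `b j = f^[k j] (b (j+1))`, `k j ≥ 1`, can be refined to a chain. -/
theorem refine_chain {α : Type*} (f : α → α) (b : ℕ → α) (k : ℕ → ℕ) (hk : ∀ j, 1 ≤ k j)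
    (hb : ∀ j, f^[k j] (b (j + 1)) = b j) :
    ∃ c : ℕ → α, (∀ n, f (c (n + 1)) = c n) ∧ (∀ j, ∃ n, b j = c n) ∧
      ∀ n, ∃ i j, c n = f^[i] (b j) := by
  let K : ℕ → ℕ := fun j => ∑ i ∈ Finset.range j, k i
  have hK : ∀ j, K (j + 1) = K j + k j := fun j => Finset.sum_range_succ _ _
  have hKge : ∀ j, j ≤ K j := by
    intro j
    induction j with
    | zero => exact Nat.zero_le _
    | succ j ih => have := hK j; have := hk j; omega
  have hKm : ∀ j d, K j ≤ K (j + d) := by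
    intro j d
    induction d with
    | zero => exact le_rfl
    | succ d ih => have := hK (j + d); rw [← add_assoc]; omega
  have hbb : ∀ j d, f^[K (j + d) - K j] (b (j + d)) = b j := by
    intro j d
    induction d with
    | zero => simp
    | succ d ih =>
      have h1 := hK (j + d)
      have h2 := hKm j d
      have h3 : K (j + (d + 1)) - K j = (K (j + d) - K j) + k (j + d) := by
        rw [← add_assoc]; omega
      rw [h3, Function.iterate_add_apply, ← add_assoc, hb, ih]
  refine ⟨fun n => f^[K n - n] (b n), ?_, ?_, fun n => ⟨_, _, rfl⟩⟩
  · intro n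
    have h1 := hK n
    have h2 := hKge n
    have h4 := hk n
    show f (f^[K (n + 1) - (n + 1)] (b (n + 1))) = f^[K n - n] (b n)
    rw [← Function.iterate_succ_apply' f]
    have h3 : (K (n + 1) - (n + 1)).succ = (K n - n) + k n := by omega
    rw [h3, Function.iterate_add_apply, hb]
  · intro j
    refine ⟨K j, ?_⟩
    obtain ⟨d, hd⟩ := Nat.exists_eq_add_of_le (hKge j)
    have := hbb j d
    rw [← hd] at this
    exact this.symm

theorem exists_seq {α : Type*} (f : α → α) (S : Set α) (hne : S.Nonempty)
    (hcmp : ∀ a ∈ S, ∀ b ∈ S, (∃ k : ℕ, f^[k] b = a) ∨ ∃ k : ℕ, f^[k] a = b)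
    (hno : ∀ m ∈ S, ∃ b ∈ S, ∀ k : ℕ, f^[k] m ≠ b) :
    ∃ (b : ℕ → α) (k : ℕ → ℕ), (∀ j, 1 ≤ k j) ∧ (∀ j, f^[k j] (b (j + 1)) = b j) ∧
      (∀ j, b j ∈ S) ∧ ∀ s ∈ S, ∃ i j, s = f^[i] (b j) := by
  obtain ⟨m0, hm0⟩ := hne
  choose! g hgS hg using hno
  let b : ℕ → α := fun j => g^[j] m0
  have hbs : ∀ j, b (j + 1) = g (b j) := fun j => Function.iterate_succ_apply' _ _ _
  have hbS : ∀ j, b j ∈ S := by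
    intro j
    induction j with
    | zero => exact hm0
    | succ j ih => rw [hbs]; exact hgS _ ih
  have hstep : ∀ j, ∃ k : ℕ, 1 ≤ k ∧ f^[k] (b (j + 1)) = b j := by
    intro j
    rcases hcmp _ (hbS j) _ (hbS (j + 1)) with ⟨k, hk⟩ | ⟨k, hk⟩
    · refine ⟨k, ?_, hk⟩
      rcases Nat.eq_zero_or_pos k with rfl | h
      · exact absurd (by rw [← hbs]; exact hk.symm) (hg _ (hbS j) 0)
      · exact h
    · exact absurd (by rw [← hbs]; exact hk) (hg _ (hbS j) k)
  choose k hk1 hk2 using hstep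
  refine ⟨b, k, hk1, hk2, hbS, ?_⟩
  intro s hs
  by_contra hcon
  push Not at hcon
  have hi : ∀ j, ∃ i : ℕ, f^[i] s = b j := by
    intro j
    rcases hcmp _ hs _ (hbS j) with ⟨i, hi⟩ | h
    · exact absurd hi.symm (hcon i j)
    · exact h
  choose i hi using hi
  have hdec : ∀ j, i (j + 1) < i j := by
    intro j
    by_contra h
    push Not at h
    obtain ⟨d, hd⟩ := Nat.exists_eq_add_of_le h
    refine hg _ (hbS j) d ?_
    rw [← hbs, ← hi j, ← hi (j + 1), ← Function.iterate_add_apply, hd, add_comm]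
  have : ∀ j, i j + j ≤ i 0 := by
    intro j
    induction j with
    | zero => exact le_rfl
    | succ j ih => have := hdec j; omega
  have h1 := this (i 0 + 1)
  omega

theorem stmt_12 [CommRing R] [Ring A] [AddCommGroup M] [Module A M]
    (φ : R →+* A) (σ : R →+* R) (t : R) (X Y : A)
    (hYX : Y * X = φ t) (hXY : X * Y = φ (σ t))
    (hXr : ∀ r : R, X * φ r = φ (σ r) * X)
    (hrY : ∀ r : R, φ r * Y = Y * φ (σ r))
    (hess : IsEssential σ)
    (hgen : Subring.closure (Set.range φ ∪ {X, Y}) = ⊤)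
    (hw : IsWeightModule (M := M) φ)
    (hsimple : IsSimpleModule A M) :
    ∃ (I : Set ℤ) (mm : ℤ → Ideal R),
      (I = Set.univ ∨ I = {i : ℤ | 0 ≤ i} ∨ I = {i : ℤ | i ≤ 0} ∨
        ∃ n : ℕ, I = {i : ℤ | 0 ≤ i ∧ i ≤ (n : ℤ)}) ∧
      (∀ i ∈ I, (mm i).IsMaximal) ∧
      (∀ i : ℤ, i ∈ I → i + 1 ∈ I → ∀ r ∈ mm i, σ r ∈ mm (i + 1)) ∧
      (∀ i₀ ∈ I, (∀ i ∈ I, i₀ ≤ i) → σ t ∈ mm i₀) ∧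
      (∀ i₁ ∈ I, (∀ i ∈ I, i ≤ i₁) → t ∈ mm i₁) ∧
      (∀ m : Ideal R, m.IsMaximal → weightSpace (M := M) φ m ≠ ⊥ →
        ∃ i ∈ I, m = mm i) := by
  classical
  let f : Ideal R → Ideal R := Ideal.comap σ
  let S : Set (Ideal R) := {m | m.IsMaximal ∧ weightSpace (M := M) φ m ≠ ⊥}
  have hcmp : ∀ a ∈ S, ∀ b ∈ S, (∃ k : ℕ, f^[k] b = a) ∨ ∃ k : ℕ, f^[k] a = b :=
    fun a ha b hb => supp_cone φ σ t X Y hXY hXr hrY hess hgen hw hsimple ha.1 hb.1 ha.2 hb.2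
  have hne : S.Nonempty := by
    by_contra hS
    have hS' : ∀ m : Ideal R, m.IsMaximal → weightSpace (M := M) φ m = ⊥ := by
      intro m hm
      by_contra h
      exact hS ⟨m, hm, h⟩
    have h1 : (⊤ : AddSubgroup M) ≤ ⊥ := by
      rw [← hw.1]
      exact iSup_le fun m => (hS' m.1 m.2).le
    have := IsSimpleModule.nontrivial A M
    obtain ⟨v, hv⟩ := exists_ne (0 : M)
    exact hv (by simpa using h1 (AddSubgroup.mem_top v))
  -- the case of a doubly infinite chain
  have fin : ∀ (b : ℕ → Ideal R) (k : ℕ → ℕ), (∀ j, 1 ≤ k j) →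
      (∀ j, f^[k j] (b (j + 1)) = b j) → (∀ j, b j ∈ S) → (∀ s ∈ S, ∃ i j, s = f^[i] (b j)) →
      ∃ mm : ℤ → Ideal R, (∀ i, (mm i).IsMaximal) ∧ (∀ i, f (mm (i + 1)) = mm i) ∧
        ∀ s ∈ S, ∃ i, s = mm i := by
    intro b k hk hb hbS hS
    obtain ⟨c, hc, hbc, hcb⟩ := refine_chain f b k hk hb
    have hstep : ∀ i : ℤ, f (f^[(-(i + 1)).toNat] (c (i + 1).toNat)) = f^[(-i).toNat] (c i.toNat) :=
      int_chain f c hc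
    refine ⟨fun i => f^[(-i).toNat] (c i.toNat), ?_, hstep, ?_⟩
    · intro i
      obtain ⟨p, q, h⟩ := hcb i.toNat
      show (f^[(-i).toNat] (c i.toNat)).IsMaximal
      rw [h]
      exact iter_max hess (iter_max hess (hbS q).1 p) _
    · intro s hs
      obtain ⟨p, q, rfl⟩ := hS s hs
      obtain ⟨n, hn⟩ := hbc q
      refine ⟨(n : ℤ) - p, ?_⟩
      rw [hn]
      clear hs
      induction p with
      | zero => simp
      | succ p ih =>
        rw [Function.iterate_succ_apply', ih]
        have := hstep ((n : ℤ) - (p + 1 : ℕ))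
        have e : (n : ℤ) - (p + 1 : ℕ) + 1 = n - p := by push_cast; ring
        rw [e] at this
        exact this
  by_cases hz : (∃ mm : ℤ → Ideal R, (∀ i, (mm i).IsMaximal) ∧ (∀ i, f (mm (i + 1)) = mm i) ∧
        ∀ s ∈ S, ∃ i, s = mm i)
  · obtain ⟨mm, h1, h2, h3⟩ := hz
    refine ⟨Set.univ, mm, Or.inl rfl, fun i _ => h1 i, ?_, ?_, ?_, ?_⟩
    · intro i _ _ r hr
      rw [← h2 i] at hr
      exact hr
    · intro i _ h
      have := h (i - 1) trivial
      omega
    · intro i _ h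
      have := h (i + 1) trivial
      omega
    · intro m hm hm0
      obtain ⟨i, hi⟩ := h3 m ⟨hm, hm0⟩
      exact ⟨i, trivial, hi⟩
  by_cases hmax : ∃ m ∈ S, ∀ b ∈ S, ∃ k : ℕ, f^[k] m = b
  · obtain ⟨m, hm, hall⟩ := hmax
    by_cases ht : t ∈ m
    · refine ⟨{i : ℤ | i ≤ 0}, fun i => f^[(-i).toNat] m, Or.inr (Or.inr (Or.inl rfl)),
        fun i _ => iter_max hess hm.1 _, ?_, ?_, ?_, ?_⟩
      · intro i hi hi1 r hr
        have hi1' : i + 1 ≤ 0 := hi1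
        have e : (-i).toNat = (-(i + 1)).toNat + 1 := by omega
        simp only [e, Function.iterate_succ_apply'] at hr
        exact hr
      · intro i hi h
        have hi' : i ≤ 0 := hi
        have := h (i - 1) (show i - 1 ≤ 0 by omega)
        omega
      · intro i hi h
        have hi' : i ≤ 0 := hi
        have := h 0 (le_refl (0 : ℤ))
        have e : i = 0 := by omega
        subst e
        exact ht
      · intro n hn hn0
        obtain ⟨k, hk⟩ := hall n ⟨hn, hn0⟩
        refine ⟨-(k : ℤ), (show -(k : ℤ) ≤ 0 by omega), ?_⟩
        simp [hk]
    · obtain ⟨n, hn, hn0, hnm⟩ := exists_above φ σ t X Y hYX hXr hess hw hm.1 hm.2 ht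
      obtain ⟨k, hk⟩ := hall n ⟨hn, hn0⟩
      apply absurd _ hz
      refine fin (fun _ => m) (fun _ => k + 1) (fun _ => by omega) ?_ (fun _ => hm) ?_
      · intro j
        show f^[k + 1] m = m
        rw [Function.iterate_succ_apply', hk]
        exact hnm
      · intro s hs
        obtain ⟨i, hi⟩ := hall s hs
        exact ⟨i, 0, hi.symm⟩
  · push Not at hmax
    obtain ⟨b, k, h1, h2, h3, h4⟩ := exists_seq f S hne hcmp hmax
    exact absurd (fin b k h1 h2 h3 h4) hz
end

section
/- Assume σ is essential and A is generated as a ring by φ(R) ∪ {X, Y}. Let M be a simple weight A-module. Then the action of X on M is either injective or locally nilpotent (i.e., for every v ∈ M there exists k ∈ ℤ_{≥0} with X^k•v = 0). -/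
variable {R A M : Type*}

theorem stmt_13 [CommRing R] [Ring A] [AddCommGroup M] [Module A M]
    (φ : R →+* A) (σ : R →+* R) (t : R) (X Y : A)
    (hYX : Y * X = φ t) (hXY : X * Y = φ (σ t))
    (hXr : ∀ r : R, X * φ r = φ (σ r) * X)
    (hrY : ∀ r : R, φ r * Y = Y * φ (σ r))
    (hess : IsEssential σ)
    (hgen : Subring.closure (Set.range φ ∪ {X, Y}) = ⊤)
    (hw : IsWeightModule (M := M) φ)
    (hsimple : IsSimpleModule A M) :
    Function.Injective (fun v : M => X • v) ∨ ∀ v : M, ∃ k : ℕ, X ^ k • v = 0 := by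
  have hpow : ∀ (k : ℕ) (r : R), ∃ r' : R, X ^ k * φ r = φ r' * X ^ k := by
    intro k
    induction k with
    | zero => intro r; exact ⟨r, by simp⟩
    | succ k ih =>
      intro r
      obtain ⟨r', h⟩ := ih (σ r)
      refine ⟨r', ?_⟩
      rw [pow_succ, mul_assoc, hXr, ← mul_assoc, h, mul_assoc]
  have hmono : ∀ (v : M) (k l : ℕ), X ^ k • v = 0 → X ^ (l + k) • v = 0 := by
    intro v k l h
    rw [pow_add, mul_smul, h, smul_zero]
  have hstab : ∀ a : A, ∀ v : M, (∃ k : ℕ, X ^ k • v = 0) → ∃ k : ℕ, X ^ k • (a • v) = 0 := by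
    intro a
    have ha : a ∈ Subring.closure (Set.range φ ∪ {X, Y}) := by rw [hgen]; trivial
    induction ha using Subring.closure_induction with
    | mem x hx =>
      rintro v ⟨k, hk⟩
      rcases hx with ⟨r, rfl⟩ | rfl | rfl
      · obtain ⟨r', h⟩ := hpow k r
        exact ⟨k, by rw [← mul_smul, h, mul_smul, hk, smul_zero]⟩
      · exact ⟨k, by rw [← mul_smul, ← pow_succ, pow_succ', mul_smul, hk, smul_zero]⟩
      · obtain ⟨r', h⟩ := hpow k (σ t)
        exact ⟨k + 1, by
          rw [← mul_smul, pow_succ, mul_assoc, hXY, h, mul_smul, hk, smul_zero]⟩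
    | zero => intro v _; exact ⟨0, by simp⟩
    | one => intro v h; simpa using h
    | add x y _ _ hx hy =>
      intro v h
      obtain ⟨k, hk⟩ := hx v h
      obtain ⟨l, hl⟩ := hy v h
      refine ⟨l + k, ?_⟩
      rw [add_smul, smul_add, hmono _ _ _ hk, add_comm l k, hmono _ _ _ hl, add_zero]
    | neg x _ hx =>
      intro v h
      obtain ⟨k, hk⟩ := hx v h
      exact ⟨k, by rw [neg_smul, smul_neg, hk, neg_zero]⟩
    | mul x y _ _ hx hy =>
      intro v h
      rw [mul_smul]
      exact hx _ (hy v h)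
  let N : Submodule A M :=
    { carrier := {v | ∃ k : ℕ, X ^ k • v = 0}
      zero_mem' := ⟨0, by simp⟩
      add_mem' := by
        rintro v w ⟨k, hk⟩ ⟨l, hl⟩
        refine ⟨l + k, ?_⟩
        rw [smul_add, hmono _ _ _ hk, add_comm l k, hmono _ _ _ hl, add_zero]
      smul_mem' := fun a v h => hstab a v h }
  rcases eq_bot_or_eq_top N with hN | hN
  · left
    intro v w h
    have h' : X • v = X • w := h
    have hm : v - w ∈ N := ⟨1, by rw [pow_one, smul_sub, h', sub_self]⟩
    rw [hN, Submodule.mem_bot] at hm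
    exact sub_eq_zero.mp hm
  · right
    intro v
    have hm : v ∈ N := by rw [hN]; trivial
    exact hm
end

section
/- Assume σ is essential and A is generated as a ring by φ(R) ∪ {X, Y}. Let M be a simple weight A-module. Then the action of Y on M is either injective or locally nilpotent (i.e., for every v ∈ M there exists k ∈ ℤ_{≥0} with Y^k•v = 0). -/
variable {R A M : Type*}

theorem aux_top [CommRing R] [Ring A] [AddCommGroup M] [Module A M]
    (φ : R →+* A) (X Y : A)
    (hgen : Subring.closure (Set.range φ ∪ {X, Y}) = ⊤)
    (hsimple : IsSimpleModule A M) (N : AddSubgroup M)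
    (hR : ∀ r, ∀ v ∈ N, φ r • v ∈ N) (hX : ∀ v ∈ N, X • v ∈ N) (hY : ∀ v ∈ N, Y • v ∈ N)
    (w : M) (hw : w ∈ N) (hw0 : w ≠ 0) (v : M) : v ∈ N := by
  have key : ∀ a : A, ∀ v ∈ N, a • v ∈ N := by
    intro a
    have ha : a ∈ Subring.closure (Set.range φ ∪ {X, Y}) := by rw [hgen]; trivial
    induction ha using Subring.closure_induction with
    | mem x hx =>
      rcases hx with ⟨r, rfl⟩ | rfl | rfl
      · exact hR r
      · exact hX
      · exact hY
    | zero => intro v _; rw [zero_smul]; exact N.zero_mem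
    | one => intro v hv; rwa [one_smul]
    | add x y _ _ hx hy => intro v hv; rw [add_smul]; exact N.add_mem (hx v hv) (hy v hv)
    | neg x _ hx => intro v hv; rw [neg_smul]; exact N.neg_mem (hx v hv)
    | mul x y _ _ hx hy => intro v hv; rw [mul_smul]; exact hx _ (hy v hv)
  let P : Submodule A M :=
    { carrier := N
      add_mem' := fun ha hb => N.add_mem ha hb
      zero_mem' := N.zero_mem
      smul_mem' := fun a v hv => key a v hv }
  have hP : P = ⊤ := by
    rcases eq_bot_or_eq_top P with h | h
    · exfalso
      have : w ∈ P := hw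
      rw [h] at this
      exact hw0 (by simpa using this)
    · exact h
  have : v ∈ P := by rw [hP]; trivial
  exact this

theorem aux_final [CommRing R] [Ring A] [AddCommGroup M] [Module A M]
    (φ : R →+* A) (σ : R →+* R) (t : R) (X Y : A)
    (hYX : Y * X = φ t)
    (hgen : Subring.closure (Set.range φ ∪ {X, Y}) = ⊤)
    (hsimple : IsSimpleModule A M)
    (hS : ∀ (k : ℕ) (v : M), Y ^ k • v = 0 → ∀ r, Y ^ k • φ r • v = 0) :
    Function.Injective (fun v : M => Y • v) ∨ ∀ v : M, ∃ k : ℕ, Y ^ k • v = 0 := by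
  by_cases hinj : ∀ v : M, Y • v = 0 → v = 0
  · left
    intro a b hab
    have := hinj (a - b) (by rw [smul_sub]; exact sub_eq_zero.2 hab)
    exact sub_eq_zero.1 this
  · right
    push Not at hinj
    obtain ⟨w, hw, hw0⟩ := hinj
    have up : ∀ (k l : ℕ) (v : M), Y ^ k • v = 0 → Y ^ (l + k) • v = 0 := by
      intro k l v h
      rw [pow_add, mul_smul, h, smul_zero]
    let N : AddSubgroup M :=
      { carrier := {v | ∃ k : ℕ, Y ^ k • v = 0}
        zero_mem' := ⟨0, smul_zero _⟩
        add_mem' := by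
          rintro a b ⟨k, hk⟩ ⟨l, hl⟩
          refine ⟨k + l, ?_⟩
          rw [smul_add, up l k b hl, add_comm k l, up k l a hk, add_zero]
        neg_mem' := by
          rintro a ⟨k, hk⟩
          exact ⟨k, by rw [smul_neg, hk, neg_zero]⟩ }
    refine aux_top φ X Y hgen hsimple N ?_ ?_ ?_ w ⟨1, by simpa using hw⟩ hw0
    · rintro r v ⟨k, hk⟩
      exact ⟨k, hS k v hk r⟩
    · rintro v ⟨k, hk⟩
      refine ⟨k + 1, ?_⟩
      rw [pow_succ, mul_smul, ← mul_smul Y X, hYX]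
      exact hS k v hk t
    · rintro v ⟨k, hk⟩
      refine ⟨k, ?_⟩
      rw [← mul_smul, ← pow_succ, pow_succ', mul_smul, hk, smul_zero]

theorem aux_caseB [CommRing R] [Ring A] [AddCommGroup M] [Module A M]
    (φ : R →+* A) (σ : R →+* R) (t : R) (X Y : A)
    (hXY : X * Y = φ (σ t))
    (hrY : ∀ r : R, φ r * Y = Y * φ (σ r))
    (hw : IsWeightModule (M := M) φ)
    (hB : ∀ m : Ideal R, m.IsMaximal → ∀ v ∈ weightSpace (M := M) φ m,
      φ (σ t) • v = 0 → Y • v = 0) (k : ℕ) :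
    ∃ c, ∀ v : M, Y ^ k • v = 0 ↔ φ c • v = 0 := by
  have H0 : ∀ v : M, ∃ q, ∀ r, Y • φ ((1 - q * σ t) * r) • v = 0 := by
    intro v
    have hv : v ∈ ⨆ m : {m : Ideal R // m.IsMaximal}, weightSpace (M := M) φ m.1 := by
      rw [hw.1]; trivial
    induction hv using AddSubgroup.iSup_induction' with
    | hp m x hx =>
      obtain ⟨m, hm⟩ := m
      by_cases htm : σ t ∈ m
      · refine ⟨0, fun r => hB m hm _ ?_ ?_⟩
        · intro s hs
          rw [← mul_smul, ← map_mul]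
          exact hx _ (m.mul_mem_right _ hs)
        · rw [← mul_smul, ← map_mul]
          exact hx _ (m.mul_mem_right _ htm)
      · obtain ⟨q, i, hi, h⟩ := hm.exists_inv htm
        refine ⟨q, fun r => ?_⟩
        rw [hx _ (m.mul_mem_right _ (by rw [← h]; simpa using hi)), smul_zero]
    | h1 => exact ⟨0, by simp⟩
    | hadd x y _ _ hx hy =>
      obtain ⟨q, hq⟩ := hx
      obtain ⟨p, hp⟩ := hy
      refine ⟨q + p - q * p * σ t, fun r => ?_⟩
      have e1 : (1 - (q + p - q * p * σ t) * σ t) * r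
        = (1 - q * σ t) * ((1 - p * σ t) * r) := by ring
      have e2 : (1 - (q + p - q * p * σ t) * σ t) * r
        = (1 - p * σ t) * ((1 - q * σ t) * r) := by ring
      rw [smul_add, smul_add]
      nth_rw 1 [e1]
      rw [e2, hq, hp, add_zero]
  have H : ∀ v : M, Y • v = 0 ↔ φ (σ t) • v = 0 := by
    intro v
    constructor
    · intro h
      rw [← hXY, mul_smul, h, smul_zero]
    · intro h
      obtain ⟨q, hq⟩ := H0 v
      have := hq 1
      rwa [mul_one, map_sub, map_one, map_mul, sub_smul, mul_smul, h, smul_zero, sub_zero,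
        one_smul] at this
  induction k with
  | zero => exact ⟨1, by simp⟩
  | succ k ih =>
    obtain ⟨c, hc⟩ := ih
    refine ⟨σ t * σ c, fun v => ?_⟩
    rw [pow_succ, mul_smul, hc, ← mul_smul, hrY, mul_smul, H, map_mul, mul_smul]

theorem aux_caseA [CommRing R] [Ring A] [AddCommGroup M] [Module A M]
    (φ : R →+* A) (σ : R →+* R) (t : R) (X Y : A)
    (hXY : X * Y = φ (σ t))
    (hXr : ∀ r : R, X * φ r = φ (σ r) * X)
    (hrY : ∀ r : R, φ r * Y = Y * φ (σ r))
    (hess : IsEssential σ)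
    (hgen : Subring.closure (Set.range φ ∪ {X, Y}) = ⊤)
    (hw : IsWeightModule (M := M) φ)
    (hsimple : IsSimpleModule A M)
    (m : Ideal R) (hm : m.IsMaximal) (v : M) (hv : v ∈ weightSpace (M := M) φ m)
    (hv1 : φ (σ t) • v = 0) (hv2 : Y • v ≠ 0) (r : R) :
    ∃ s, ∀ u : M, φ r • u = φ (σ s) • u := by
  classical
  have hv0 : v ≠ 0 := by rintro rfl; exact hv2 (smul_zero _)
  let C : Ideal R → Ideal R := Ideal.comap σ
  let I : ℕ → Ideal R := fun k => C^[k] m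
  have hIs : ∀ k, I (k + 1) = Ideal.comap σ (I k) := fun k => Function.iterate_succ_apply' C k m
  have hImax : ∀ k, (I k).IsMaximal := by
    intro k
    induction k with
    | zero => exact hm
    | succ k ih =>
      rw [hIs]
      have hsurj : Function.Surjective ((Ideal.Quotient.mk (I k)).comp σ) := hess _ ih
      have hker : RingHom.ker ((Ideal.Quotient.mk (I k)).comp σ) = Ideal.comap σ (I k) := by
        rw [← RingHom.comap_ker, Ideal.mk_ker]
      rw [← hker]
      let _ := Ideal.Quotient.field (I k)
      exact RingHom.ker_isMaximal_of_surjective _ hsurj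
  have hYk : ∀ k, Y ^ k • v ∈ weightSpace (M := M) φ (I k) := by
    intro k
    induction k with
    | zero => rw [pow_zero, one_smul]; exact hv
    | succ k ih =>
      intro s hs
      rw [hIs] at hs
      rw [pow_succ', mul_smul, ← mul_smul (φ s), hrY, mul_smul, ih _ hs, smul_zero]
  -- lifting residues through σ
  have hlift : ∀ k r, ∃ a, σ a - r ∈ I k := by
    intro k r
    obtain ⟨a, ha⟩ := hess _ (hImax k) (Ideal.Quotient.mk _ r)
    exact ⟨a, Ideal.Quotient.eq.1 ha⟩
  let N : AddSubgroup M := AddSubgroup.closure {u | ∃ r k, u = φ r • Y ^ (k + 1) • v}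
  have hN : ∀ u, u ∈ N := by
    have hclosed : ∀ a : A, (∀ r k, a • φ r • Y ^ (k + 1) • v ∈ N) → ∀ u ∈ N, a • u ∈ N := by
      intro a ha u hu
      induction hu using AddSubgroup.closure_induction with
      | mem x hx => obtain ⟨r, k, rfl⟩ := hx; exact ha r k
      | zero => rw [smul_zero]; exact N.zero_mem
      | add x y _ _ hx hy => rw [smul_add]; exact N.add_mem hx hy
      | neg x _ hx => rw [smul_neg]; exact N.neg_mem hx
    refine aux_top φ X Y hgen hsimple N ?_ ?_ ?_ (Y • v) ?_ hv2
    · intro s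
      apply hclosed
      intro r k
      refine AddSubgroup.subset_closure ⟨s * r, k, ?_⟩
      rw [map_mul, mul_smul]
    · apply hclosed
      intro r k
      have e : X • φ r • Y ^ (k + 1) • v = φ (σ r * σ t) • Y ^ k • v := by
        rw [← mul_smul X, hXr, mul_smul, pow_succ', mul_smul Y, ← mul_smul X, hXY, map_mul,
          mul_smul]
      rw [e]
      cases k with
      | zero =>
        rw [map_mul, mul_smul, pow_zero, one_smul, hv1, smul_zero]; exact N.zero_mem
      | succ k => exact AddSubgroup.subset_closure ⟨_, _, rfl⟩
    · apply hclosed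
      intro r k
      obtain ⟨a, ha⟩ := hlift (k + 1) r
      have e : φ r • Y ^ (k + 1) • v = φ (σ a) • Y ^ (k + 1) • v := by
        have := hYk (k + 1) _ ha
        rw [map_sub, sub_smul] at this
        exact (sub_eq_zero.1 this).symm
      refine AddSubgroup.subset_closure ⟨a, k + 1, ?_⟩
      rw [e, ← mul_smul Y, ← hrY, mul_smul, ← mul_smul Y, ← pow_succ']
    · exact AddSubgroup.subset_closure ⟨1, 0, by simp⟩
  -- periodicity
  obtain ⟨p, hp⟩ : ∃ p, I (p + 1) = m := by
    by_contra hcon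
    push Not at hcon
    have hd := hw.2 ⟨m, hm⟩
    have hle : N ≤ ⨆ (j : {m : Ideal R // m.IsMaximal}) (_ : j ≠ ⟨m, hm⟩),
        weightSpace (M := M) φ j.1 := by
      refine (AddSubgroup.closure_le _).2 ?_
      rintro _ ⟨r, k, rfl⟩
      refine (le_iSup₂_of_le (f := fun (j : {m : Ideal R // m.IsMaximal}) (_ : j ≠ ⟨m, hm⟩) =>
        weightSpace (M := M) φ j.1) ⟨I (k + 1), hImax _⟩
        (fun h => hcon k (congrArg Subtype.val h)) le_rfl) ?_
      intro s hs
      rw [← mul_smul, ← map_mul]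
      exact hYk _ _ (Ideal.mul_mem_right _ _ hs)
    have := AddSubgroup.disjoint_def.1 hd hv (hle (hN v))
    exact hv0 this
  have hper : ∀ j, C^[p] (I (j + 1)) = I j := by
    intro j
    change C^[p] (C^[j + 1] m) = C^[j] m
    rw [← Function.iterate_add_apply, show p + (j + 1) = j + (p + 1) by ring,
      Function.iterate_add_apply]
    congr 1
  have hex : ∀ J : Ideal R, ∃ a, (∃ j, J = I (j + 1)) → σ a - r ∈ C^[p] J := by
    intro J
    by_cases h : ∃ j, J = I (j + 1)
    · obtain ⟨j, rfl⟩ := h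
      obtain ⟨a, ha⟩ := hlift j r
      exact ⟨a, fun _ => by rw [hper]; exact ha⟩
    · exact ⟨0, fun h' => absurd h' h⟩
  choose f hf using hex
  have hmod : ∀ j, I (j + 1) ∈ (Finset.range (p + 1)).image I := by
    intro j
    have hP : Function.IsPeriodicPt C (p + 1) m := hp
    refine Finset.mem_image.2 ⟨(j + 1) % (p + 1), Finset.mem_range.2 (Nat.mod_lt _ (by omega)), ?_⟩
    exact hP.iterate_mod_apply (j + 1)
  have hfin : Finite {J // J ∈ (Finset.range (p + 1)).image I} :=
    Finite.of_fintype (((Finset.range (p + 1)).image I : Finset (Ideal R)) : Type _)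
  obtain ⟨s, hs⟩ := Ideal.exists_forall_sub_mem_ideal
    (I := fun J : {J // J ∈ (Finset.range (p + 1)).image I} => J.1) (by
      rintro ⟨J, hJ⟩ ⟨K, hK⟩ hne
      obtain ⟨a, _, rfl⟩ := Finset.mem_image.1 hJ
      obtain ⟨b, _, rfl⟩ := Finset.mem_image.1 hK
      have := hImax a
      have := hImax b
      exact Ideal.isCoprime_of_isMaximal (fun h => hne (Subtype.ext h))) (fun J => f J.1)
  have hsI : ∀ j, r - σ s ∈ I j := by
    intro j
    have h1 := hs ⟨_, hmod j⟩
    have h2 := hf (I (j + 1)) ⟨j, rfl⟩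
    rw [hper] at h2
    have h3 : σ (s - f (I (j + 1))) ∈ I j := by
      have h1' : s - f (I (j + 1)) ∈ I (j + 1) := h1
      exact Ideal.mem_comap.1 ((hIs j).le h1')
    have := (I j).neg_mem ((I j).add_mem h2 h3)
    rw [map_sub] at this
    convert this using 1
    ring
  refine ⟨s, fun u => ?_⟩
  have hu := hN u
  rw [← sub_eq_zero, ← sub_smul, ← map_sub]
  induction hu using AddSubgroup.closure_induction with
  | mem x hx =>
    obtain ⟨q, k, rfl⟩ := hx
    rw [← mul_smul, ← map_mul]
    exact hYk _ _ (Ideal.mul_mem_right _ _ (hsI _))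
  | zero => rw [smul_zero]
  | add x y _ _ hx hy => rw [smul_add, hx, hy, add_zero]
  | neg x _ hx => rw [smul_neg, hx, neg_zero]

theorem stmt_14 [CommRing R] [Ring A] [AddCommGroup M] [Module A M]
    (φ : R →+* A) (σ : R →+* R) (t : R) (X Y : A)
    (hYX : Y * X = φ t) (hXY : X * Y = φ (σ t))
    (hXr : ∀ r : R, X * φ r = φ (σ r) * X)
    (hrY : ∀ r : R, φ r * Y = Y * φ (σ r))
    (hess : IsEssential σ)
    (hgen : Subring.closure (Set.range φ ∪ {X, Y}) = ⊤)
    (hw : IsWeightModule (M := M) φ)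
    (hsimple : IsSimpleModule A M) :
    Function.Injective (fun v : M => Y • v) ∨ ∀ v : M, ∃ k : ℕ, Y ^ k • v = 0 := by
  apply aux_final φ σ t X Y hYX hgen hsimple
  by_cases hB : ∀ m : Ideal R, m.IsMaximal → ∀ v ∈ weightSpace (M := M) φ m,
      φ (σ t) • v = 0 → Y • v = 0
  · intro k v hk r
    obtain ⟨c, hc⟩ := aux_caseB φ σ t X Y hXY hrY hw hB k
    rw [hc] at hk ⊢
    rw [← mul_smul, ← map_mul, mul_comm, map_mul, mul_smul, hk, smul_zero]
  · push Not at hB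
    obtain ⟨m, hm, v, hv, hv1, hv2⟩ := hB
    have hA := aux_caseA φ σ t X Y hXY hXr hrY hess hgen hw hsimple m hm v hv hv1 hv2
    intro k
    induction k with
    | zero =>
      intro u hu r
      rw [pow_zero, one_smul] at hu
      rw [hu, smul_zero, smul_zero]
    | succ k ih =>
      intro u hu r
      obtain ⟨s, hs⟩ := hA r
      rw [pow_succ, mul_smul] at hu ⊢
      rw [hs, ← mul_smul Y, ← hrY, mul_smul]
      exact ih _ hu s
end

section
/- Assume A is generated as a ring by φ(R) ∪ {X, Y}. Let M be a simple A-module, m a maximal ideal of R, and v ∈ M a nonzero vector with r•v = 0 for all r ∈ m and X•v = 0. Then M = Σ_{i ≥ 0} Y^i•(R•v); that is, M is spanned by the vectors Y^i•(φ(r)•v) with i ∈ ℤ_{≥0} and r ∈ R. -/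
variable {R A M : Type*}

theorem stmt_15 [CommRing R] [Ring A] [AddCommGroup M] [Module A M]
    (φ : R →+* A) (σ : R →+* R) (t : R) (X Y : A)
    (hYX : Y * X = φ t) (hXY : X * Y = φ (σ t))
    (hXr : ∀ r : R, X * φ r = φ (σ r) * X)
    (hrY : ∀ r : R, φ r * Y = Y * φ (σ r))
    (hgen : Subring.closure (Set.range φ ∪ {X, Y}) = ⊤)
    (hsimple : IsSimpleModule A M)
    (m : Ideal R) (hm : m.IsMaximal)
    (v : M) (hv : v ≠ 0) (hwv : ∀ r ∈ m, φ r • v = 0) (hXv : X • v = 0) :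
    ∀ w : M, w ∈ AddSubgroup.closure
      {x : M | ∃ (i : ℕ) (r : R), x = Y ^ i • (φ r • v)} := by
  set S : AddSubgroup M := AddSubgroup.closure
      {x : M | ∃ (i : ℕ) (r : R), x = Y ^ i • (φ r • v)} with hS
  have hmem : ∀ (i : ℕ) (r : R), Y ^ i • (φ r • v) ∈ S := fun i r =>
    AddSubgroup.subset_closure ⟨i, r, rfl⟩
  have key : ∀ a : A, (∀ (i : ℕ) (r : R), a • (Y ^ i • (φ r • v)) ∈ S) →
      ∀ w ∈ S, a • w ∈ S := by
    intro a ha w hw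
    induction hw using AddSubgroup.closure_induction with
    | mem x hx =>
      obtain ⟨i, r, rfl⟩ := hx
      exact ha i r
    | zero => rw [smul_zero]; exact S.zero_mem
    | add x y _ _ h1 h2 => rw [smul_add]; exact S.add_mem h1 h2
    | neg x _ h => rw [smul_neg]; exact S.neg_mem h
  have hcomm : ∀ (i : ℕ) (s : R), ∃ s' : R, φ s * Y ^ i = Y ^ i * φ s' := by
    intro i
    induction i with
    | zero => intro s; exact ⟨s, by simp⟩
    | succ n ih =>
      intro s
      obtain ⟨s', h⟩ := ih s
      exact ⟨σ s', by rw [pow_succ, ← mul_assoc, h, mul_assoc, hrY, mul_assoc]⟩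
  have hR : ∀ (s : R) (i : ℕ) (r : R), φ s • (Y ^ i • (φ r • v)) ∈ S := by
    intro s i r
    obtain ⟨s', h⟩ := hcomm i s
    have : φ s • (Y ^ i • (φ r • v)) = Y ^ i • (φ (s' * r) • v) := by
      rw [smul_smul, h, map_mul, mul_smul, mul_smul]
    rw [this]
    exact hmem _ _
  have hall : ∀ a : A, ∀ w ∈ S, a • w ∈ S := by
    intro a
    have ha : a ∈ Subring.closure (Set.range φ ∪ {X, Y}) := by rw [hgen]; trivial
    induction ha using Subring.closure_induction with
    | mem x hx =>
      apply key
      rcases hx with ⟨s, rfl⟩ | rfl | rfl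
      · exact hR s
      · intro i r
        cases i with
        | zero =>
          rw [pow_zero, one_smul, smul_smul, hXr, mul_smul, hXv, smul_zero]
          exact S.zero_mem
        | succ n =>
          rw [pow_succ', smul_smul, ← mul_assoc, hXY, mul_smul]
          exact hR _ _ _
      · intro i r
        rw [smul_smul, ← pow_succ']
        exact hmem _ _
    | zero => intro w _; rw [zero_smul]; exact S.zero_mem
    | one => intro w hw; rwa [one_smul]
    | add x y _ _ h1 h2 =>
      intro w hw; rw [add_smul]; exact S.add_mem (h1 w hw) (h2 w hw)
    | neg x _ h => intro w hw; rw [neg_smul]; exact S.neg_mem (h w hw)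
    | mul x y _ _ h1 h2 => intro w hw; rw [mul_smul]; exact h1 _ (h2 w hw)
  let N : Submodule A M :=
    { carrier := S
      add_mem' := fun h1 h2 => S.add_mem h1 h2
      zero_mem' := S.zero_mem
      smul_mem' := fun a w hw => hall a w hw }
  have hvN : v ∈ N := by
    have := hmem 0 1
    rw [pow_zero, one_smul, map_one, one_smul] at this
    exact this
  intro w
  have hw : w ∈ N := by
    rcases eq_bot_or_eq_top N with h | h
    · rw [h] at hvN
      exact absurd ((Submodule.mem_bot A).1 hvN) hv
    · rw [h]; trivial
  exact hw
end

section
/- Assume σ is essential and A is generated as a ring by φ(R) ∪ {X, Y}. Let M be a simple weight A-module. Then supp(M) is at most countable. -/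
variable {R A M : Type*}

/-- In a weight module every vector is a finite sum of weight vectors. -/
theorem exists_weight_list [CommRing R] [Ring A] [AddCommGroup M] [Module A M]
    (φ : R →+* A) (hw : IsWeightModule (M := M) φ) (v : M) :
    ∃ l : List M, (∀ w ∈ l, ∃ m : {m : Ideal R // m.IsMaximal}, w ∈ weightSpace (M := M) φ m.1) ∧
      l.sum = v := by
  have hv : v ∈ (⨆ m : {m : Ideal R // m.IsMaximal}, weightSpace (M := M) φ m.1) := by
    rw [hw.1]; trivial
  induction hv using AddSubgroup.iSup_induction' with
  | hp i x hx => exact ⟨[x], by simpa using ⟨i.1, i.2, hx⟩, by simp⟩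
  | h1 => exact ⟨[], by simp, by simp⟩
  | hadd x y hx hy ihx ihy =>
    obtain ⟨l, hl, rfl⟩ := ihx
    obtain ⟨k, hk, rfl⟩ := ihy
    refine ⟨l ++ k, ?_, by simp⟩
    intro w hw
    rcases List.mem_append.1 hw with h | h
    · exact hl w h
    · exact hk w h

theorem stmt_16 [CommRing R] [Ring A] [AddCommGroup M] [Module A M]
    (φ : R →+* A) (σ : R →+* R) (t : R) (X Y : A)
    (hYX : Y * X = φ t) (hXY : X * Y = φ (σ t))
    (hXr : ∀ r : R, X * φ r = φ (σ r) * X)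
    (hrY : ∀ r : R, φ r * Y = Y * φ (σ r))
    (hess : IsEssential σ)
    (hgen : Subring.closure (Set.range φ ∪ {X, Y}) = ⊤)
    (hw : IsWeightModule (M := M) φ)
    (hsimple : IsSimpleModule A M) :
    Set.Countable {m : Ideal R | m.IsMaximal ∧ weightSpace (M := M) φ m ≠ ⊥} := by
  classical
  choose L hL hLs using exists_weight_list (M := M) φ hw
  have : Nontrivial M := IsSimpleModule.nontrivial A M
  obtain ⟨v0, hv0⟩ := exists_ne (0 : M)
  let T : ℕ → Set M := fun n => Nat.rec {w | w ∈ L v0}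
    (fun _ S => ⋃ v ∈ S, ({w | w ∈ L (X • v)} ∪ {w | w ∈ L (Y • v)})) n
  have hTc : ∀ n, (T n).Countable := by
    intro n
    induction n with
    | zero => exact (List.finite_toSet (L v0)).countable
    | succ n ih =>
      exact ih.biUnion fun v _ =>
        (List.finite_toSet (L (X • v))).countable.union (List.finite_toSet (L (Y • v))).countable
  let S : Set M := ⋃ n, T n
  have hSc : S.Countable := Set.countable_iUnion hTc
  have hS0 : ∀ w ∈ L v0, w ∈ S := fun w h => Set.mem_iUnion.2 ⟨0, h⟩
  have hSX : ∀ v ∈ S, ∀ w ∈ L (X • v), w ∈ S := by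
    intro v hv w h
    obtain ⟨n, hn⟩ := Set.mem_iUnion.1 hv
    exact Set.mem_iUnion.2 ⟨n + 1, Set.mem_biUnion hn (Or.inl h)⟩
  have hSY : ∀ v ∈ S, ∀ w ∈ L (Y • v), w ∈ S := by
    intro v hv w h
    obtain ⟨n, hn⟩ := Set.mem_iUnion.1 hv
    exact Set.mem_iUnion.2 ⟨n + 1, Set.mem_biUnion hn (Or.inr h)⟩
  have hSw : ∀ v ∈ S, ∃ m : {m : Ideal R // m.IsMaximal}, v ∈ weightSpace (M := M) φ m.1 := by
    intro v hv
    obtain ⟨n, hn⟩ := Set.mem_iUnion.1 hv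
    cases n with
    | zero => exact hL v0 v hn
    | succ n =>
      obtain ⟨u, _, h⟩ := Set.mem_iUnion₂.1 hn
      rcases h with h | h
      · exact hL _ _ h
      · exact hL _ _ h
  let G : Set M := {x | ∃ r : R, ∃ v ∈ S, x = φ r • v}
  let N : AddSubgroup M := AddSubgroup.closure G
  have hNs : ∀ (r : R) (l : List M), (∀ w ∈ l, w ∈ S) → φ r • l.sum ∈ N := by
    intro r l hl
    rw [List.smul_sum]
    refine AddSubgroup.list_sum_mem _ ?_
    intro x hx
    obtain ⟨w, hw', rfl⟩ := List.mem_map.1 hx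
    exact AddSubgroup.subset_closure ⟨r, w, hl w hw', rfl⟩
  have hst : ∀ a : A, (∀ x ∈ G, a • x ∈ N) → ∀ x ∈ N, a • x ∈ N := by
    intro a ha x hx
    have : N ≤ N.comap (DistribSMul.toAddMonoidHom M a) :=
      (AddSubgroup.closure_le _).2 fun y hy => ha y hy
    exact this hx
  let B : Subring A :=
    { carrier := {a | ∀ x ∈ N, a • x ∈ N}
      zero_mem' := fun x _ => by rw [zero_smul]; exact N.zero_mem
      one_mem' := fun x hx => by rw [one_smul]; exact hx
      add_mem' := fun ha hb x hx => by rw [add_smul]; exact N.add_mem (ha x hx) (hb x hx)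
      mul_mem' := fun ha hb x hx => by rw [mul_smul]; exact ha _ (hb x hx)
      neg_mem' := fun ha x hx => by rw [neg_smul]; exact N.neg_mem (ha x hx) }
  have hB : Subring.closure (Set.range φ ∪ {X, Y}) ≤ B := by
    rw [Subring.closure_le]
    rintro a (⟨s, rfl⟩ | rfl | rfl)
    · refine hst _ ?_
      rintro x ⟨r, v, hv, rfl⟩
      rw [← mul_smul, ← map_mul]
      exact AddSubgroup.subset_closure ⟨s * r, v, hv, rfl⟩
    · refine hst _ ?_
      rintro x ⟨r, v, hv, rfl⟩
      rw [← mul_smul, hXr, mul_smul, ← hLs (a • v)]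
      exact hNs _ _ (hSX v hv)
    · refine hst _ ?_
      rintro x ⟨r, v, hv, rfl⟩
      obtain ⟨m, hm⟩ := hSw v hv
      obtain ⟨s, hs⟩ := hess m.1 m.2 (Ideal.Quotient.mk m.1 r)
      have h0 : φ (σ s - r) • v = 0 := hm _ (Ideal.Quotient.eq.1 hs)
      rw [map_sub, sub_smul, sub_eq_zero] at h0
      rw [← h0, ← mul_smul, ← hrY, mul_smul, ← hLs (a • v)]
      exact hNs _ _ (hSY v hv)
  let P : Submodule A M :=
    { N with smul_mem' := fun a x hx => (hB (hgen ▸ Subring.mem_top a) : a ∈ B) x hx }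
  have hv0P : v0 ∈ P := by
    have := hNs 1 (L v0) hS0
    rw [hLs, map_one, one_smul] at this
    exact this
  have hP : P = ⊤ := by
    rcases eq_bot_or_eq_top P with h | h
    · rw [h] at hv0P
      exact absurd ((Submodule.mem_bot A).1 hv0P) hv0
    · exact h
  rcases isEmpty_or_nonempty {m : Ideal R // m.IsMaximal} with hemp | hnon
  · exact Set.countable_empty.mono fun m hm => (hemp.false ⟨m, hm.1⟩).elim
  choose! μ hμ using hSw
  refine (hSc.image (fun v => (μ v).1)).mono ?_
  rintro m ⟨hm, hne⟩
  by_contra hcon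
  apply hne
  have hle : N ≤ ⨆ j : {m : Ideal R // m.IsMaximal}, ⨆ _ : j ≠ ⟨m, hm⟩,
      weightSpace (M := M) φ j.1 := by
    refine (AddSubgroup.closure_le _).2 ?_
    rintro x ⟨r, v, hv, rfl⟩
    have hj : μ v ≠ ⟨m, hm⟩ := fun h => hcon ⟨v, hv, by simp [h]⟩
    refine (le_iSup₂_of_le (f := fun (j : {m : Ideal R // m.IsMaximal}) (_ : j ≠ ⟨m, hm⟩) =>
      weightSpace (M := M) φ j.1) (μ v) hj le_rfl) ?_
    intro s hs
    rw [← mul_smul, ← map_mul]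
    exact hμ v hv _ (Ideal.mul_mem_right _ _ hs)
  have hd := hw.2 ⟨m, hm⟩
  rw [eq_bot_iff]
  refine hd le_rfl (fun x _ => hle ?_)
  have : x ∈ P := hP ▸ Submodule.mem_top
  exact this
end
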